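/- arXiv:1602.08643 — 2 statements merged into one kernel-verified Lean document; each statement's English description precedes it below -/
import Mathlib

section
/- Under the stated assumptions, the thermodynamic limit of the defect-formation free energy exists and is given by G_∞(A) = −log( (∫_ℝ exp(−(ψ+P)(y) + W'(A)·y) dy) / (∫_ℝ exp(−ψ(y) + W'(A)·y) dy) ), and moreover for every A ∈ ℝ there is a constant C > 0 such that |G_N(A) − G_∞(A)| ≤ C/N for all integers N ≥ 2. -/
/-!
Let `σ` be the force under which the Gibbs density proportional to `exp (-ψ y + σ y)` has mean `A`.
By convex duality `W' A = σ`. Let `φ` be that density recentred at `0`, with variance `w`, and let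
`k` be the weight `exp (-(ψ + P) y + σ y)` with the same shift and normalisation. Since the length
of the chain is fixed, the force changes both partition functions by the same factor, and their
ratio is `(k ⋆ f) 0 / (φ ⋆ f) 0`, where `f` is the convolution power of `φ` formed by the `N - 1`
bonds away from the defect. It remains to show that this ratio is `∫ k + O(1 / N)`; no local limit
theorem is needed.

* `f` is again log-concave, and `(-log φ)'' ≤ c` improves to `(-log f)'' ≤ c / (N - 1)`. Its score
  `(log f)' 0` is then at most `c / (N - 1)` times the standard deviation `√((N - 1) w)`, so `f` is
  affine near the origin up to a relative error `O(1 / N)`.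
* The slope of `f` is only `O(1 / √N)`, but it multiplies the first moment of `k`. Subtracting a
  multiple of `x φ x` from `k` removes this moment, and it leaves `(k ⋆ f) 0` unchanged: the bonds
  are exchangeable, so each of them has mean `0` given that they sum to `0`.
-/

noncomputable section

open MeasureTheory Real Filter

/-- Extend interior degrees of freedom `u : ℝ^(n-1)` to the whole chain via the
boundary conditions `u 0 = 0` and `u n = b`. -/
def bc (n : ℕ) (b : ℝ) (u : Fin (n - 1) → ℝ) : ℕ → ℝ := fun i =>
  if h : 0 < i ∧ i < n then u ⟨i - 1, by omega⟩ else if i = 0 then 0 else b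

/-- The chain energy `∑_{i=1}^n φ_i (u_i - u_{i-1})` with boundary conditions
`u 0 = 0`, `u n = b`. -/
def chainE (φ : ℕ → ℝ → ℝ) (n : ℕ) (b : ℝ) (u : Fin (n - 1) → ℝ) : ℝ :=
  ∑ i ∈ Finset.range n, φ (i + 1) (bc n b u (i + 1) - bc n b u i)

/-- The free energy `-log ∫_{ℝ^{N-1}} exp(-∑ φ_i(u_i - u_{i-1}) - defect(u₁)) du`,
with `u 0 = 0`, `u N = N A`. -/
def freeEnergy (φ : ℕ → ℝ → ℝ) (defect : ℝ → ℝ) (N : ℕ) (A : ℝ) : ℝ :=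
  - Real.log (∫ u : Fin (N - 1) → ℝ,
      Real.exp (-(chainE φ N (N * A) u) - defect (bc N (N * A) u 1)))

/-- The Cauchy–Born strain energy `W(A)`. -/
def W (ψ : ℝ → ℝ) (A : ℝ) : ℝ :=
  ⨆ σ : ℝ, (σ * A - Real.log (∫ y : ℝ, Real.exp (-ψ y + σ * y)))

/-! ### Convex potentials with bounded curvature -/

section Convexity

open Set

lemma hasDerivAt_of_abs_sub_le_sq {F : ℝ → ℝ} {p C x : ℝ}
    (h : ∀ y, |F y - F x - p * (y - x)| ≤ C * (y - x) ^ 2) : HasDerivAt F p x := by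
  have hsub : Tendsto (fun y => y - x) (nhds x) (nhds 0) :=
    tendsto_sub_nhds_zero_iff.2 tendsto_id
  have hquad : (fun y => (y - x) ^ 2) =o[nhds x] fun y => y - x :=
    (Asymptotics.isLittleO_pow_id (𝕜 := ℝ) one_lt_two).comp_tendsto hsub
  refine hasDerivAt_iff_isLittleO.2
    ((Asymptotics.isBigO_of_le' (c := C) _ fun y => ?_).trans_isLittleO hquad)
  rw [norm_of_nonneg (sq_nonneg (y - x)), norm_eq_abs, smul_eq_mul, mul_comm _ p]
  exact h y

lemma eq_zero_of_forall_mul_le_sq {d C : ℝ} (h : ∀ t, d * t ≤ C * t ^ 2) : d = 0 := by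
  have hderiv : HasDerivAt (fun t : ℝ => C * t ^ 2 - d * t) (-d) 0 := by
    have := ((hasDerivAt_pow 2 (0 : ℝ)).const_mul C).sub ((hasDerivAt_id (0 : ℝ)).const_mul d)
    exact this.congr_deriv (by simp)
  have hmin : IsLocalMin (fun t : ℝ => C * t ^ 2 - d * t) 0 :=
    Eventually.of_forall fun t => by simpa using h t
  exact neg_eq_zero.1 (hmin.hasDerivAt_eq_zero hderiv)

lemma exists_subgradient {f : ℝ → ℝ} (hf : ConvexOn ℝ univ f) (x : ℝ) :
    ∃ p, ∀ y, f x + p * (y - x) ≤ f y := by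
  have hx : x ∈ interior (univ : Set ℝ) := by simp
  refine ⟨derivWithin f (Ioi x) x, fun y => ?_⟩
  rcases lt_trichotomy y x with hyx | rfl | hxy
  · have hslope := (hf.slope_le_leftDeriv_of_mem_interior (mem_univ y) hx hyx).trans
      (hf.leftDeriv_le_rightDeriv_of_mem_interior hx)
    rw [slope_def_field, div_le_iff₀ (sub_pos.2 hyx)] at hslope
    linarith
  · simp
  · have hslope := hf.rightDeriv_le_slope_of_mem_interior hx (mem_univ y) hxy
    rw [slope_def_field, le_div_iff₀ (sub_pos.2 hxy)] at hslope
    linarith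

/-- A leftmost interior maximum would violate the midpoint inequality. -/
lemma nonpos_of_midpoint {g : ℝ → ℝ} {a b x : ℝ} (hg : Continuous g)
    (h : ∀ x u, 2 * g x ≤ g (x + u) + g (x - u)) (ha : g a ≤ 0) (hb : g b ≤ 0)
    (hx : x ∈ Icc a b) : g x ≤ 0 := by
  obtain ⟨m, hm, hmax⟩ := isCompact_Icc.exists_isMaxOn ⟨x, hx⟩ hg.continuousOn
  obtain ⟨l, ⟨hl, hgl : g l = g m⟩, hleft⟩ :=
    (isCompact_Icc.inter_right (isClosed_singleton.preimage hg)).exists_isLeast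
      (s := Icc a b ∩ g ⁻¹' {g m}) ⟨m, hm, rfl⟩
  replace hmax : ∀ y ∈ Icc a b, g y ≤ g l := fun y hy => hgl ▸ hmax hy
  refine (hmax x hx).trans ?_
  by_contra! hpos
  have hal : a < l := hl.1.lt_of_ne fun h => by subst h; linarith
  have hlb : l < b := hl.2.lt_of_ne fun h => by subst h; linarith
  set u := min (l - a) (b - l)
  have hu : 0 < u := lt_min (sub_pos.2 hal) (sub_pos.2 hlb)
  have hua : u ≤ l - a := min_le_left _ _
  have hub : u ≤ b - l := min_le_right _ _
  have hadd : g (l + u) ≤ g l := hmax _ ⟨by linarith, by linarith⟩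
  have hsub : g (l - u) < g l := by
    have hmem : l - u ∈ Icc a b := ⟨by linarith, by linarith⟩
    refine (hmax _ hmem).lt_of_ne fun heq => ?_
    linarith [hleft ⟨hmem, heq.trans hgl⟩]
  linarith [h l u]

lemma convexOn_univ_of_midpoint {f : ℝ → ℝ} (hf : Continuous f)
    (h : ∀ x u, 2 * f x ≤ f (x + u) + f (x - u)) : ConvexOn ℝ univ f := by
  refine convexOn_of_slope_mono_adjacent convex_univ fun {a x b} _ _ hax hxb => ?_
  set s := (f b - f a) / (b - a)
  have hs : s * (b - a) = f b - f a := div_mul_cancel₀ _ (by linarith)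
  have hchord : f x - f a - s * (x - a) ≤ 0 :=
    nonpos_of_midpoint (g := fun y => f y - f a - s * (y - a)) (by fun_prop)
      (fun y u => by linarith [h y u]) (by simp) (by linarith) ⟨hax.le, hxb.le⟩
  calc (f x - f a) / (x - a) ≤ s := by rw [div_le_iff₀ (sub_pos.2 hax)]; linarith
    _ ≤ (f b - f x) / (b - x) := by rw [le_div_iff₀ (sub_pos.2 hxb)]; linarith

lemma differentiable_deriv_of_contDiff_two {V : ℝ → ℝ} (hV : ContDiff ℝ 2 V) :
    Differentiable ℝ (deriv V) :=
  ((contDiff_succ_iff_deriv (n := 1)).1 hV).2.2.differentiable one_ne_zero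

lemma hasDerivAt_sub_sq {V : ℝ → ℝ} {V' x : ℝ} (hV : HasDerivAt V V' x) (c : ℝ) :
    HasDerivAt (fun y => V y - c / 2 * y ^ 2) (V' - c * x) x :=
  (hV.sub ((hasDerivAt_pow 2 x).const_mul (c / 2))).congr_deriv (by push_cast; ring)

lemma deriv2_sub_sq {V : ℝ → ℝ} (hV : ContDiff ℝ 2 V) (c x : ℝ) :
    deriv^[2] (fun y => V y - c / 2 * y ^ 2) x = deriv (deriv V) x - c := by
  have hderiv : deriv (fun y => V y - c / 2 * y ^ 2) = fun y => deriv V y - c * y :=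
    funext fun y => (hasDerivAt_sub_sq (hV.differentiable two_ne_zero y).hasDerivAt c).deriv
  have hderiv2 : HasDerivAt (fun y => deriv V y - c * y) (deriv (deriv V) x - c) x :=
    ((differentiable_deriv_of_contDiff_two hV x).hasDerivAt.sub
      ((hasDerivAt_id x).const_mul c)).congr_deriv (by ring)
  rw [Function.iterate_succ_apply', Function.iterate_one, hderiv, hderiv2.deriv]

/-- `V` is convex and `c / 2 * x ^ 2 - V x` is convex: a formulation of `0 ≤ V'' ≤ c` which does not
mention derivatives. -/
structure SmoothConvex (c : ℝ) (V : ℝ → ℝ) : Prop where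
  convexOn : ConvexOn ℝ univ V
  concaveOn : ConcaveOn ℝ univ fun x => V x - c / 2 * x ^ 2

namespace SmoothConvex

variable {c : ℝ} {V : ℝ → ℝ}

lemma of_midpoint (hV : Continuous V) (hlower : ∀ x u, 2 * V x ≤ V (x + u) + V (x - u))
    (hupper : ∀ x u, V (x + u) + V (x - u) ≤ 2 * V x + c * u ^ 2) : SmoothConvex c V := by
  refine ⟨convexOn_univ_of_midpoint hV hlower, neg_convexOn_iff.1 ?_⟩
  refine convexOn_univ_of_midpoint (by fun_prop) fun x u => ?_
  simp only [Pi.neg_apply]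
  linarith [hupper x u]

lemma of_deriv2 (hV : ContDiff ℝ 2 V) (hlower : ∀ x, 0 ≤ deriv (deriv V) x)
    (hupper : ∀ x, deriv (deriv V) x ≤ c) : SmoothConvex c V where
  convexOn := convexOn_univ_of_deriv2_nonneg (hV.differentiable two_ne_zero)
    (differentiable_deriv_of_contDiff_two hV) hlower
  concaveOn := by
    refine concaveOn_univ_of_deriv2_nonpos ?_ ?_ fun x => ?_
    · exact (hV.differentiable two_ne_zero).sub (by fun_prop)
    · exact differentiable_deriv_of_contDiff_two (hV.sub (by fun_prop))
    · rw [deriv2_sub_sq hV]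
      linarith [hupper x]

lemma exists_gradient (hV : SmoothConvex c V) (x : ℝ) :
    ∃ p, ∀ y, V x + p * (y - x) ≤ V y ∧ V y ≤ V x + p * (y - x) + c / 2 * (y - x) ^ 2 := by
  obtain ⟨p, hp⟩ := exists_subgradient hV.convexOn x
  obtain ⟨q, hq⟩ := exists_subgradient (neg_convexOn_iff.2 hV.concaveOn) x
  have hupper : ∀ y, V y ≤ V x + (c * x - q) * (y - x) + c / 2 * (y - x) ^ 2 := fun y => by
    have := hq y
    simp only [Pi.neg_apply] at this
    linarith
  have heq : p - (c * x - q) = 0 := eq_zero_of_forall_mul_le_sq (C := c / 2) fun t => by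
    have hl := hp (x + t)
    have hu := hupper (x + t)
    rw [add_sub_cancel_left] at hl hu
    linarith
  exact ⟨p, fun y => ⟨hp y, sub_eq_zero.1 heq ▸ hupper y⟩⟩

lemma hasDerivAt_of_tangent_bounds {p x : ℝ}
    (hp : ∀ y, V x + p * (y - x) ≤ V y ∧ V y ≤ V x + p * (y - x) + c / 2 * (y - x) ^ 2) :
    HasDerivAt V p x :=
  hasDerivAt_of_abs_sub_le_sq (C := c / 2) fun y =>
    abs_le.2 ⟨by linarith [(hp y).1, (hp y).2], by linarith [(hp y).2]⟩

lemma differentiable (hV : SmoothConvex c V) : Differentiable ℝ V := fun x =>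
  (hasDerivAt_of_tangent_bounds (hV.exists_gradient x).choose_spec).differentiableAt

lemma tangent_bounds (hV : SmoothConvex c V) (x y : ℝ) :
    V x + deriv V x * (y - x) ≤ V y ∧
      V y ≤ V x + deriv V x * (y - x) + c / 2 * (y - x) ^ 2 := by
  obtain ⟨p, hp⟩ := hV.exists_gradient x
  exact (hasDerivAt_of_tangent_bounds hp).deriv ▸ hp y

lemma continuous (hV : SmoothConvex c V) : Continuous V :=
  hV.differentiable.continuous

lemma two_mul_le (hV : SmoothConvex c V) (x u : ℝ) : 2 * V x ≤ V (x + u) + V (x - u) := by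
  linarith [(hV.tangent_bounds x (x + u)).1, (hV.tangent_bounds x (x - u)).1]

lemma le_two_mul_add (hV : SmoothConvex c V) (x u : ℝ) :
    V (x + u) + V (x - u) ≤ 2 * V x + c * u ^ 2 := by
  linarith [(hV.tangent_bounds x (x + u)).2, (hV.tangent_bounds x (x - u)).2]

lemma nonneg (hV : SmoothConvex c V) : 0 ≤ c := by
  linarith [hV.two_mul_le 0 1, hV.le_two_mul_add 0 1]

lemma translate (hV : SmoothConvex c V) (a σ b : ℝ) :
    SmoothConvex c fun x => V (x + a) - σ * (x + a) + b := by
  have hcont := hV.continuous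
  refine of_midpoint (by fun_prop) (fun x u => ?_) fun x u => ?_
  · rw [add_right_comm x, sub_add_eq_add_sub x u]
    linarith [hV.two_mul_le (x + a) u]
  · rw [add_right_comm x, sub_add_eq_add_sub x u]
    linarith [hV.le_two_mul_add (x + a) u]

lemma deriv_mono (hV : SmoothConvex c V) : Monotone (deriv V) :=
  monotoneOn_univ.1 (hV.convexOn.monotoneOn_deriv fun x _ => hV.differentiable x)

lemma deriv_sub_le (hV : SmoothConvex c V) {x y : ℝ} (hxy : x ≤ y) :
    deriv V y - deriv V x ≤ c * (y - x) := by
  have hderiv : ∀ z, HasDerivAt (fun z => V z - c / 2 * z ^ 2) (deriv V z - c * z) z := fun z =>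
    hasDerivAt_sub_sq (hV.differentiable z).hasDerivAt c
  have hanti := hV.concaveOn.antitoneOn_deriv (fun z _ => (hderiv z).differentiableAt)
    (mem_univ x) (mem_univ y) hxy
  rw [(hderiv x).deriv, (hderiv y).deriv] at hanti
  linarith

lemma abs_deriv_sub_le (hV : SmoothConvex c V) (x y : ℝ) :
    |deriv V y - deriv V x| ≤ c * |y - x| := by
  wlog hxy : x ≤ y generalizing x y
  · rw [abs_sub_comm, abs_sub_comm y]
    exact this y x (le_of_not_ge hxy)
  rw [abs_of_nonneg (sub_nonneg.2 (hV.deriv_mono hxy)), abs_of_nonneg (sub_nonneg.2 hxy)]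
  exact hV.deriv_sub_le hxy

lemma add_le_add_of_add_eq (hV : SmoothConvex c V) {p q r s : ℝ} (hpq : p ≤ q) (hpr : p ≤ r)
    (h : q + r = p + s) : V q + V r ≤ V p + V s := by
  wlog hqr : q ≤ r generalizing q r
  · linarith [this hpr hpq (by linarith) (le_of_not_ge hqr)]
  have hslope : 0 ≤ (deriv V r - deriv V q) * (q - p) :=
    mul_nonneg (sub_nonneg.2 (hV.deriv_mono hqr)) (sub_nonneg.2 hpq)
  have hp := (hV.tangent_bounds q p).1
  have hs := (hV.tangent_bounds r s).1
  rw [show s - r = q - p by linarith] at hs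
  linarith

end SmoothConvex

end Convexity

/-! ### Exponential moments -/

/-- The function `k` is integrable against every exponential weight, i.e. the measure with density
`k` has exponential moments of every order. -/
def HasExpMoments (k : ℝ → ℝ) : Prop :=
  ∀ K : ℝ, Integrable fun x => k x * exp (K * |x|)

namespace HasExpMoments

variable {k l : ℝ → ℝ}

lemma integrable (hk : HasExpMoments k) : Integrable k := by
  simpa using hk 0

lemma mul_of_abs_le (hk : HasExpMoments k) {g : ℝ → ℝ} (hg : AEStronglyMeasurable g) {C K : ℝ}
    (hbound : ∀ x, |g x| ≤ C * exp (K * |x|)) : HasExpMoments fun x => g x * k x := by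
  intro M
  refine ((hk (K + M)).const_mul C).mono
    ((hg.mul hk.integrable.1).mul (by fun_prop)) (ae_of_all _ fun x => ?_)
  have hC : 0 ≤ C := le_of_mul_le_mul_right (by simpa using (abs_nonneg _).trans (hbound 0)) one_pos
  simp only [norm_mul, norm_eq_abs, abs_exp, abs_of_nonneg hC, add_mul, exp_add]
  calc |g x| * |k x| * exp (M * |x|) ≤ C * exp (K * |x|) * |k x| * exp (M * |x|) := by
        gcongr
        exact hbound x
    _ = _ := by ring

lemma integrable_abs_mul_exp (hk : HasExpMoments k) (K : ℝ) :
    Integrable fun x => |k x| * exp (K * |x|) :=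
  (hk K).abs.congr (ae_of_all _ fun x => by simp only [abs_mul, abs_exp])

lemma integral_abs_mul_exp_mono (hk : HasExpMoments k) {K L : ℝ} (hKL : K ≤ L) :
    ∫ x, |k x| * exp (K * |x|) ≤ ∫ x, |k x| * exp (L * |x|) :=
  integral_mono (hk.integrable_abs_mul_exp K) (hk.integrable_abs_mul_exp L) fun x => by
    simp only
    gcongr

lemma pow_mul (hk : HasExpMoments k) (n : ℕ) : HasExpMoments fun x => x ^ n * k x := by
  refine hk.mul_of_abs_le (C := n.factorial) (K := 1) (by fun_prop) fun x => ?_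
  have hexp := Real.pow_div_factorial_le_exp |x| (abs_nonneg x) n
  rwa [div_le_iff₀' (by positivity), ← abs_pow, ← one_mul |x|] at hexp

lemma id_mul (hk : HasExpMoments k) : HasExpMoments fun x => x * k x := by
  simpa using hk.pow_mul 1

lemma exp_mul (hk : HasExpMoments k) (σ : ℝ) : HasExpMoments fun x => exp (σ * x) * k x := by
  refine hk.mul_of_abs_le (C := 1) (K := |σ|) (by fun_prop) fun x => ?_
  rw [abs_exp, one_mul, ← abs_mul]
  exact exp_le_exp.2 (le_abs_self _)

lemma const_mul (hk : HasExpMoments k) (r : ℝ) : HasExpMoments fun x => r * k x := by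
  refine hk.mul_of_abs_le (C := |r|) (K := 0) (by fun_prop) fun x => ?_
  simp

lemma sub (hk : HasExpMoments k) (hl : HasExpMoments l) : HasExpMoments fun x => k x - l x :=
  fun K => ((hk K).sub (hl K)).congr (ae_of_all _ fun _ => (sub_mul _ _ _).symm)

lemma comp_add_right (hk : HasExpMoments k) (a : ℝ) : HasExpMoments fun x => k (x + a) := by
  intro K
  have hweight : HasExpMoments fun x => exp (K * |x - a|) * k x := by
    refine hk.mul_of_abs_le (C := exp (|K| * |a|)) (K := |K|) (by fun_prop) fun x => ?_
    rw [abs_exp, ← exp_add, ← mul_add]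
    have htri : |x - a| ≤ |a| + |x| := (abs_sub x a).trans_eq (add_comm _ _)
    gcongr
    exact le_abs_self K
  simpa [mul_comm] using hweight.integrable.comp_add_right a

end HasExpMoments

lemma strongConvexOn_univ_of_deriv2 {V : ℝ → ℝ} {m : ℝ} (hV : ContDiff ℝ 2 V)
    (h : ∀ x, m ≤ deriv (deriv V) x) : StrongConvexOn Set.univ m V := by
  rw [strongConvexOn_iff_convex]
  simp only [norm_eq_abs, sq_abs]
  refine convexOn_univ_of_deriv2_nonneg ?_ ?_ fun x => ?_
  · exact (hV.differentiable two_ne_zero).sub (by fun_prop)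
  · exact differentiable_deriv_of_contDiff_two (hV.sub (by fun_prop))
  · rw [deriv2_sub_sq hV]
    linarith [h x]

lemma hasExpMoments_gaussian {b : ℝ} (hb : 0 < b) : HasExpMoments fun x => exp (-b * x ^ 2) := by
  intro K
  refine ((integrable_exp_neg_mul_sq (half_pos hb)).const_mul (exp (K ^ 2 / (2 * b)))).mono'
    (by fun_prop) (ae_of_all _ fun x => ?_)
  rw [norm_of_nonneg (by positivity), ← exp_add, ← exp_add, exp_le_exp]
  have hsq : K ^ 2 / (2 * b) + b / 2 * |x| ^ 2 - K * |x| = (K - b * |x|) ^ 2 / (2 * b) := by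
    field_simp
    ring
  have hnonneg : 0 ≤ (K - b * |x|) ^ 2 / (2 * b) := by positivity
  rw [← hsq, sq_abs] at hnonneg
  linarith

lemma hasExpMoments_exp_neg {V : ℝ → ℝ} {m : ℝ} (hm : 0 < m)
    (hV : StrongConvexOn Set.univ m V) : HasExpMoments fun x => exp (-V x) := by
  have hconv : ConvexOn ℝ Set.univ V := UniformConvexOn.convexOn hV fun r => by
    simp only [Pi.zero_apply]
    positivity
  have hcont : Continuous V := continuousOn_univ.1 (hconv.continuousOn isOpen_univ)
  rw [strongConvexOn_iff_convex] at hV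
  obtain ⟨p, hp⟩ := exists_subgradient hV 0
  intro K
  refine (((hasExpMoments_gaussian (half_pos hm)).exp_mul (-p)).const_mul (exp (-V 0)) K).mono'
    (by fun_prop) (ae_of_all _ fun x => ?_)
  rw [norm_of_nonneg (by positivity)]
  gcongr
  simp only [← exp_add, exp_le_exp]
  have := hp x
  simp only [norm_eq_abs, sq_abs] at this
  linarith

namespace SmoothConvex

variable {c : ℝ} {V : ℝ → ℝ}

lemma hasDerivAt_exp_neg (hV : SmoothConvex c V) (x : ℝ) :
    HasDerivAt (fun x => exp (-V x)) (-(deriv V x * exp (-V x))) x :=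
  (hV.differentiable x).hasDerivAt.fun_neg.exp.congr_deriv (by ring)

lemma integrable_deriv_mul_exp_neg (hV : SmoothConvex c V) (h0 : Integrable fun x => exp (-V x))
    (h1 : Integrable fun x => x * exp (-V x)) :
    Integrable fun x => deriv V x * exp (-V x) := by
  have hcont := hV.continuous
  refine ((h0.const_mul |deriv V 0|).add (h1.norm.const_mul c)).mono'
    ((measurable_deriv V).aestronglyMeasurable.mul (by fun_prop)) (ae_of_all _ fun x => ?_)
  have hderiv : |deriv V x| ≤ |deriv V 0| + c * |x| := by
    have := hV.abs_deriv_sub_le 0 x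
    rw [sub_zero] at this
    linarith [abs_sub_abs_le_abs_sub (deriv V x) (deriv V 0)]
  simp only [Pi.add_apply, norm_mul, norm_eq_abs, abs_exp, ← mul_assoc, ← add_mul]
  gcongr

lemma integral_deriv_mul_exp_neg (hV : SmoothConvex c V) (h0 : Integrable fun x => exp (-V x))
    (h1 : Integrable fun x => x * exp (-V x)) : ∫ x, deriv V x * exp (-V x) = 0 := by
  have hint := integral_eq_zero_of_hasDerivAt_of_integrable hV.hasDerivAt_exp_neg
    (hV.integrable_deriv_mul_exp_neg h0 h1).neg h0
  rwa [integral_neg, neg_eq_zero] at hint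

lemma abs_deriv_mul_integral_le (hV : SmoothConvex c V) (h0 : Integrable fun x => exp (-V x))
    (h1 : Integrable fun x => x * exp (-V x)) (a : ℝ) :
    |deriv V a| * ∫ x, exp (-V x) ≤ c * ∫ x, |x - a| * exp (-V x) := by
  have hscore := hV.integrable_deriv_mul_exp_neg h0 h1
  have hdist : Integrable fun x => |x - a| * exp (-V x) :=
    (h1.sub (h0.const_mul a)).abs.congr (ae_of_all _ fun x => by
      simp only [Pi.sub_apply, ← sub_mul, abs_mul, abs_exp])
  calc |deriv V a| * ∫ x, exp (-V x)
      = |∫ x, (deriv V x - deriv V a) * exp (-V x)| := by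
        simp only [sub_mul]
        rw [integral_sub hscore (h0.const_mul _), hV.integral_deriv_mul_exp_neg h0 h1, zero_sub,
          abs_neg, integral_const_mul, abs_mul,
          abs_of_nonneg (integral_nonneg fun x => (exp_pos (-V x)).le)]
    _ ≤ ∫ x, |(deriv V x - deriv V a) * exp (-V x)| := abs_integral_le_integral_abs
    _ ≤ ∫ x, c * (|x - a| * exp (-V x)) := by
        refine integral_mono_of_nonneg (ae_of_all _ fun x => abs_nonneg _) (hdist.const_mul c)
          (ae_of_all _ fun x => ?_)
        simp only [abs_mul, abs_exp, ← mul_assoc]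
        gcongr
        exact hV.abs_deriv_sub_le a x
    _ = c * ∫ x, |x - a| * exp (-V x) := integral_const_mul _ _

lemma exists_exp_neg_le (hV : SmoothConvex c V) (h0 : Integrable fun x => exp (-V x))
    (h1 : Integrable fun x => x * exp (-V x)) : ∃ B, ∀ x, exp (-V x) ≤ B := by
  have hscore := hV.integrable_deriv_mul_exp_neg h0 h1
  refine ⟨exp (-V 0) + ∫ x, |deriv V x * exp (-V x)|, fun x => ?_⟩
  have hftc := intervalIntegral.integral_eq_sub_of_hasDerivAt (a := 0) (b := x)
    (fun y _ => hV.hasDerivAt_exp_neg y) hscore.neg.intervalIntegrable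
  have hle : |∫ y in (0)..x, -(deriv V y * exp (-V y))| ≤ ∫ y, |deriv V y * exp (-V y)| := by
    rw [← norm_eq_abs]
    refine intervalIntegral.norm_integral_le_integral_norm_uIoc.trans ?_
    simp only [norm_neg, norm_eq_abs]
    exact setIntegral_le_integral hscore.abs (ae_of_all _ fun _ => abs_nonneg _)
  rw [hftc] at hle
  linarith [le_abs_self (exp (-V x) - exp (-V 0))]

lemma neg_log {F : ℝ → ℝ} (hF : Continuous F) (hpos : ∀ x, 0 < F x)
    (hlower : ∀ x u, F (x + u) * F (x - u) ≤ F x ^ 2)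
    (hupper : ∀ x u, F x ^ 2 * exp (-(c * u ^ 2)) ≤ F (x + u) * F (x - u)) :
    SmoothConvex c fun x => -log (F x) := by
  have hmul : ∀ x y, log (F x * F y) = log (F x) + log (F y) := fun x y =>
    log_mul (hpos x).ne' (hpos y).ne'
  refine of_midpoint (hF.log fun x => (hpos x).ne').neg (fun x u => ?_) fun x u => ?_
  · have hlog := log_le_log (mul_pos (hpos _) (hpos _)) (hlower x u)
    rw [sq, hmul, hmul] at hlog
    linarith
  · have hlog := log_le_log (mul_pos (pow_pos (hpos x) 2) (exp_pos _)) (hupper x u)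
    rw [log_mul (pow_pos (hpos x) 2).ne' (exp_pos _).ne', log_exp, sq, hmul, hmul] at hlog
    linarith

end SmoothConvex

/-! ### Convolution on the line -/

section Integrals

variable {X : Type*} [MeasurableSpace X] {μ : Measure X}

/-- Jensen's inequality for the exponential, with respect to an unnormalised density `f`. -/
lemma exp_mul_integral_le_integral {f g h : X → ℝ} {m : ℝ} (hf0 : ∀ x, 0 ≤ f x)
    (hf : Integrable f μ) (hgf : Integrable (fun x => g x * f x) μ) (hh : Integrable h μ)
    (hm : ∫ x, g x * f x ∂μ = m * ∫ x, f x ∂μ) (hle : ∀ x, exp (g x) * f x ≤ h x) :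
    exp m * ∫ x, f x ∂μ ≤ ∫ x, h x ∂μ := by
  have hpointwise : ∀ x, exp m * ((1 - m) * f x + g x * f x) ≤ h x := fun x => by
    refine le_trans ?_ (hle x)
    rw [← add_mul, ← mul_assoc, ← add_sub_cancel m (g x), exp_add, add_sub_cancel]
    gcongr
    · exact hf0 x
    · linarith [add_one_le_exp (g x - m)]
  have hint := integral_mono (((hf.const_mul (1 - m)).fun_add hgf).const_mul (exp m)) hh hpointwise
  rw [integral_const_mul, integral_add (hf.const_mul _) hgf, integral_const_mul, hm] at hint
  linarith

lemma andreief_le [SFinite μ] {p p' r r' : X → ℝ} (hpr : Integrable (fun y => p y * r y) μ)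
    (hpr' : Integrable (fun y => p y * r' y) μ) (hp'r : Integrable (fun y => p' y * r y) μ)
    (hp'r' : Integrable (fun y => p' y * r' y) μ)
    (hminors : ∀ y z, 0 ≤ (p y * p' z - p z * p' y) * (r y * r' z - r z * r' y)) :
    (∫ y, p y * r' y ∂μ) * (∫ y, p' y * r y ∂μ) ≤
      (∫ y, p y * r y ∂μ) * ∫ y, p' y * r' y ∂μ := by
  have hnonneg := integral_nonneg (μ := μ.prod μ) (f := fun z : X × X =>
    (p z.1 * p' z.2 - p z.2 * p' z.1) * (r z.1 * r' z.2 - r z.2 * r' z.1))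
    fun z => hminors z.1 z.2
  have hexpand : ∀ z : X × X,
      (p z.1 * p' z.2 - p z.2 * p' z.1) * (r z.1 * r' z.2 - r z.2 * r' z.1) =
        (p z.1 * r z.1) * (p' z.2 * r' z.2) + (p' z.1 * r' z.1) * (p z.2 * r z.2) -
        ((p z.1 * r' z.1) * (p' z.2 * r z.2) + (p' z.1 * r z.1) * (p z.2 * r' z.2)) :=
    fun z => by ring
  have i₁ := hpr.mul_prod hp'r'
  have i₂ := hp'r'.mul_prod hpr
  have i₃ := hpr'.mul_prod hp'r
  have i₄ := hp'r.mul_prod hpr'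
  simp only [hexpand] at hnonneg
  rw [integral_sub (i₁.fun_add i₂) (i₃.fun_add i₄), integral_add i₁ i₂, integral_add i₃ i₄,
    integral_prod_mul (fun y => p y * r y) (fun y => p' y * r' y),
    integral_prod_mul (fun y => p' y * r' y) (fun y => p y * r y),
    integral_prod_mul (fun y => p y * r' y) (fun y => p' y * r y),
    integral_prod_mul (fun y => p' y * r y) (fun y => p y * r' y)] at hnonneg
  linarith

lemma sq_integral_le_mul_integral [SFinite μ] {f g h : X → ℝ} (hf : Integrable f μ)
    (hg : Integrable g μ) (hh : Integrable h μ) (hf0 : ∀ x, 0 ≤ f x) (hg0 : ∀ x, 0 ≤ g x)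
    (hle : ∀ x, h x ^ 2 ≤ f x * g x) :
    (∫ x, h x ∂μ) ^ 2 ≤ (∫ x, f x ∂μ) * ∫ x, g x ∂μ := by
  have hpointwise : ∀ z : X × X,
      2 * (h z.1 * h z.2) ≤ f z.1 * g z.2 + g z.1 * f z.2 := fun z => by
    refine abs_le_of_sq_le_sq' ?_ (add_nonneg (mul_nonneg (hf0 _) (hg0 _))
      (mul_nonneg (hg0 _) (hf0 _))) |>.2
    calc (2 * (h z.1 * h z.2)) ^ 2 = 4 * (h z.1 ^ 2 * h z.2 ^ 2) := by ring
      _ ≤ 4 * ((f z.1 * g z.1) * (f z.2 * g z.2)) := by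
          gcongr
          · exact mul_nonneg (hf0 _) (hg0 _)
          · exact hle _
          · exact hle _
      _ ≤ _ := by linarith [sq_nonneg (f z.1 * g z.2 - g z.1 * f z.2)]
  have hint : ∫ z : X × X, 2 * (h z.1 * h z.2) ∂μ.prod μ ≤
      ∫ z : X × X, (f z.1 * g z.2 + g z.1 * f z.2) ∂μ.prod μ :=
    integral_mono ((hh.mul_prod hh).const_mul 2) ((hf.mul_prod hg).add (hg.mul_prod hf)) hpointwise
  rw [integral_const_mul, integral_add (hf.mul_prod hg) (hg.mul_prod hf),
    integral_prod_mul, integral_prod_mul, integral_prod_mul] at hint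
  linarith

lemma integral_pos_of_forall_pos [NeZero μ] {f : X → ℝ} (hf : Integrable f μ)
    (hpos : ∀ x, 0 < f x) : 0 < ∫ x, f x ∂μ := by
  refine (integral_pos_iff_support_of_nonneg (fun x => (hpos x).le) hf).2 ?_
  rw [Function.support_eq_univ fun x => (hpos x).ne']
  exact NeZero.pos _

end Integrals

open ContinuousLinearMap
open scoped Convolution

section Convolution

variable {f g : ℝ → ℝ}

lemma convolution_apply (f g : ℝ → ℝ) (x : ℝ) : (f ⋆ g) x = ∫ t, f t * g (x - t) := rfl

lemma convolutionExistsAt_iff {x : ℝ} : ConvolutionExistsAt f g x (lsmul ℝ ℝ) volume ↔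
    Integrable fun t => f t * g (x - t) := Iff.rfl

lemma convolutionExistsAt_symm {x : ℝ} : ConvolutionExistsAt f g x (lsmul ℝ ℝ) volume ↔
    ConvolutionExistsAt g f x (lsmul ℝ ℝ) volume := by
  rw [convolutionExistsAt_iff_integrable_swap, convolutionExistsAt_iff]
  simp only [lsmul_apply, smul_eq_mul, mul_comm]

lemma convolution_comm (f g : ℝ → ℝ) : f ⋆ g = g ⋆ f := by
  ext x
  rw [convolution_lsmul_swap, convolution_apply]
  simp only [smul_eq_mul, mul_comm]

lemma integral_comp_add_mul_comp_sub (f g : ℝ → ℝ) (s t : ℝ) :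
    ∫ y, f (y + s) * g (t - y) = (f ⋆ g) (t + s) := by
  rw [convolution_apply, ← integral_add_right_eq_self (fun y => f y * g (t + s - y)) s]
  simp only [add_sub_add_right_eq_sub]

lemma integrable_comp_add_mul_comp_sub {s t : ℝ}
    (h : ConvolutionExistsAt f g (t + s) (lsmul ℝ ℝ) volume) :
    Integrable fun y => f (y + s) * g (t - y) := by
  simpa [add_sub_add_right_eq_sub] using h.integrable.comp_add_right s

lemma convolutionExistsAt_of_abs_le {B : ℝ} (hf : Integrable f)
    (hg : Continuous g) (hB : ∀ x, |g x| ≤ B) (x : ℝ) :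
    ConvolutionExistsAt f g x (lsmul ℝ ℝ) volume :=
  hf.mul_bdd (by fun_prop) (ae_of_all _ fun _ => hB _)

lemma continuous_convolution_of_abs_le {B : ℝ} (hf : Integrable f)
    (hg : Continuous g) (hB : ∀ x, |g x| ≤ B) : Continuous (f ⋆ g) :=
  BddAbove.continuous_convolution_right_of_integrable _
    ⟨B, Set.forall_mem_range.2 hB⟩ hf hg

lemma convolution_left_comm {h : ℝ → ℝ} {B : ℝ} (hf : Integrable f) (hg : Integrable g)
    (hh : Continuous h) (hB : ∀ x, |h x| ≤ B) : f ⋆ (g ⋆ h) = g ⋆ (f ⋆ h) := by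
  ext x
  have hint : Integrable (fun p : ℝ × ℝ => f p.1 * (g p.2 * h (x - p.1 - p.2)))
      (volume.prod volume) := by
    simp only [← mul_assoc]
    exact (hf.mul_prod hg).mul_bdd (by fun_prop) (ae_of_all _ fun _ => hB _)
  simp only [convolution_apply, ← integral_const_mul]
  rw [integral_integral_swap hint]
  refine integral_congr_ae (ae_of_all _ fun t => integral_congr_ae (ae_of_all _ fun s => ?_))
  simp only [sub_right_comm x s t]
  ring

/-- Multiplication by the variable is a derivation of the convolution algebra. -/
lemma id_mul_convolution {x : ℝ}
    (hf : ConvolutionExistsAt (fun t => t * f t) g x (lsmul ℝ ℝ) volume)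
    (hg : ConvolutionExistsAt f (fun t => t * g t) x (lsmul ℝ ℝ) volume) :
    x * (f ⋆ g) x = ((fun t => t * f t) ⋆ g) x + (f ⋆ fun t => t * g t) x := by
  rw [convolution_apply, ← integral_const_mul]
  refine (integral_congr_ae (ae_of_all _ fun t => ?_)).trans (integral_add hf hg)
  simp only [lsmul_apply, smul_eq_mul]
  ring

lemma id_mul_convolution_ae (hf : Integrable f) (hg : Integrable g)
    (hf1 : Integrable fun t => t * f t) (hg1 : Integrable fun t => t * g t) :
    (fun x => x * (f ⋆ g) x) =ᵐ[volume]
      fun x => ((fun t => t * f t) ⋆ g) x + (f ⋆ fun t => t * g t) x := by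
  filter_upwards [hf1.ae_convolution_exists (lsmul ℝ ℝ) hg,
    hf.ae_convolution_exists (lsmul ℝ ℝ) hg1] with x using id_mul_convolution

lemma integral_id_mul_convolution (hf : Integrable f) (hg : Integrable g)
    (hf1 : Integrable fun t => t * f t) (hg1 : Integrable fun t => t * g t) :
    ∫ x, x * (f ⋆ g) x = (∫ x, x * f x) * (∫ x, g x) + (∫ x, f x) * ∫ x, x * g x := by
  rw [integral_congr_ae (id_mul_convolution_ae hf hg hf1 hg1),
    integral_add (hf1.integrable_convolution _ hg) (hf.integrable_convolution _ hg1),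
    integral_convolution _ hf1 hg, integral_convolution _ hf hg1]
  simp only [lsmul_apply, smul_eq_mul]

lemma sq_mul_convolution_ae (hf : Integrable f) (hg : Integrable g)
    (hf1 : Integrable fun t => t * f t) (hg1 : Integrable fun t => t * g t)
    (hf2 : Integrable fun t => t ^ 2 * f t) (hg2 : Integrable fun t => t ^ 2 * g t) :
    (fun x => x ^ 2 * (f ⋆ g) x) =ᵐ[volume] fun x => ((fun t => t ^ 2 * f t) ⋆ g) x +
      2 * ((fun t => t * f t) ⋆ fun t => t * g t) x + (f ⋆ fun t => t ^ 2 * g t) x := by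
  filter_upwards [hf2.ae_convolution_exists (lsmul ℝ ℝ) hg,
    hf1.ae_convolution_exists (lsmul ℝ ℝ) hg1, hf.ae_convolution_exists (lsmul ℝ ℝ) hg2]
    with x h₂₀ h₁₁ h₀₂
  rw [convolutionExistsAt_iff] at h₂₀ h₁₁ h₀₂
  simp only [convolution_apply, ← integral_const_mul]
  rw [← integral_add h₂₀ (h₁₁.const_mul 2), ← integral_add (h₂₀.fun_add (h₁₁.const_mul 2)) h₀₂]
  exact integral_congr_ae (ae_of_all _ fun t => by ring)

lemma integrable_sq_mul_convolution (hf : Integrable f) (hg : Integrable g)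
    (hf1 : Integrable fun t => t * f t) (hg1 : Integrable fun t => t * g t)
    (hf2 : Integrable fun t => t ^ 2 * f t) (hg2 : Integrable fun t => t ^ 2 * g t) :
    Integrable fun x => x ^ 2 * (f ⋆ g) x :=
  (((hf2.integrable_convolution (lsmul ℝ ℝ) hg).add
    ((hf1.integrable_convolution (lsmul ℝ ℝ) hg1).const_mul 2)).add
      (hf.integrable_convolution (lsmul ℝ ℝ) hg2)).congr
        (sq_mul_convolution_ae hf hg hf1 hg1 hf2 hg2).symm

lemma integral_sq_mul_convolution (hf : Integrable f) (hg : Integrable g)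
    (hf1 : Integrable fun t => t * f t) (hg1 : Integrable fun t => t * g t)
    (hf2 : Integrable fun t => t ^ 2 * f t) (hg2 : Integrable fun t => t ^ 2 * g t) :
    ∫ x, x ^ 2 * (f ⋆ g) x = (∫ x, x ^ 2 * f x) * (∫ x, g x) +
      2 * ((∫ x, x * f x) * ∫ x, x * g x) + (∫ x, f x) * ∫ x, x ^ 2 * g x := by
  have h₂₀ := hf2.integrable_convolution (lsmul ℝ ℝ) hg
  have h₁₁ := hf1.integrable_convolution (lsmul ℝ ℝ) hg1
  have h₀₂ := hf.integrable_convolution (lsmul ℝ ℝ) hg2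
  rw [integral_congr_ae (sq_mul_convolution_ae hf hg hf1 hg1 hf2 hg2),
    integral_add (h₂₀.fun_add (h₁₁.const_mul 2)) h₀₂, integral_add h₂₀ (h₁₁.const_mul 2),
    integral_const_mul, integral_convolution _ hf2 hg, integral_convolution _ hf1 hg1,
    integral_convolution _ hf hg2]
  simp only [lsmul_apply, smul_eq_mul]

end Convolution

/-- The `(n + 1)`-fold convolution power of `φ`: the density of the sum of `n + 1` independent
random variables with density `φ`. -/
def convPow (φ : ℝ → ℝ) : ℕ → ℝ → ℝ
  | 0 => φ
  | n + 1 => φ ⋆ convPow φ n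

/-! ### Log-concave densities -/

lemma exp_le_one_add_add_sq_mul_exp_abs (u : ℝ) : exp u ≤ 1 + u + u ^ 2 * exp |u| := by
  have htaylor := Complex.norm_exp_sub_sum_le_norm_mul_exp (u : ℂ) 2
  have hcast : Complex.exp u - ∑ m ∈ Finset.range 2, (u : ℂ) ^ m / m.factorial =
      ((exp u - (1 + u) : ℝ) : ℂ) := by
    simp [Finset.sum_range_succ]
  rw [hcast, Complex.norm_real, Complex.norm_real, norm_eq_abs, norm_eq_abs, sq_abs] at htaylor
  linarith [(le_abs_self _).trans htaylor]

/-- A probability density `f` with mean `0` and variance `v` such that `0 ≤ (-log f)'' ≤ c`. -/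
structure CentredDensity (c v : ℝ) (f : ℝ → ℝ) : Prop where
  pos : ∀ x, 0 < f x
  smoothConvex : SmoothConvex c fun x => -log (f x)
  integrable : Integrable f
  integrable_sq_mul : Integrable fun x => x ^ 2 * f x
  integral_eq_one : ∫ x, f x = 1
  integral_id_mul : ∫ x, x * f x = 0
  integral_sq_mul : ∫ x, x ^ 2 * f x = v

namespace CentredDensity

variable {a c v w : ℝ} {φ f g : ℝ → ℝ}

lemma exp_neg_neg_log (hf : CentredDensity c v f) : (fun x => exp (-(-log (f x)))) = f := by
  simp only [neg_neg, exp_log (hf.pos _)]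

lemma continuous (hf : CentredDensity c v f) : Continuous f :=
  hf.exp_neg_neg_log ▸ continuous_exp.comp hf.smoothConvex.continuous.neg

lemma integrable_id_mul (hf : CentredDensity c v f) : Integrable fun x => x * f x := by
  have hcont := hf.continuous
  refine (hf.integrable.add hf.integrable_sq_mul).mono' (by fun_prop) (ae_of_all _ fun x => ?_)
  rw [norm_mul, norm_eq_abs, norm_of_nonneg (hf.pos x).le, Pi.add_apply, ← one_add_mul]
  have hx : |x| ≤ 1 + x ^ 2 := by nlinarith [sq_abs x, sq_nonneg (|x| - 1)]
  exact mul_le_mul_of_nonneg_right hx (hf.pos x).le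

lemma exists_abs_le (hf : CentredDensity c v f) : ∃ B, ∀ x, |f x| ≤ B := by
  have hexp := fun x => congrFun hf.exp_neg_neg_log x
  obtain ⟨B, hB⟩ := hf.smoothConvex.exists_exp_neg_le (by simpa only [hexp] using hf.integrable)
    (by simpa only [hexp] using hf.integrable_id_mul)
  exact ⟨B, fun x => by simpa only [hexp, abs_of_pos (hf.pos x)] using hB x⟩

lemma mul_le_mul_of_add_eq (hf : CentredDensity c v f) {p q r s : ℝ} (hpq : p ≤ q) (hpr : p ≤ r)
    (h : q + r = p + s) : f p * f s ≤ f q * f r := by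
  have hlog := hf.smoothConvex.add_le_add_of_add_eq hpq hpr h
  rw [← log_le_log_iff (mul_pos (hf.pos _) (hf.pos _)) (mul_pos (hf.pos _) (hf.pos _)),
    log_mul (hf.pos _).ne' (hf.pos _).ne', log_mul (hf.pos _).ne' (hf.pos _).ne']
  linarith

lemma sq_mul_exp_le (hf : CentredDensity c v f) (x u : ℝ) :
    f x ^ 2 * exp (-(c * u ^ 2)) ≤ f (x + u) * f (x - u) := by
  have hlog := hf.smoothConvex.le_two_mul_add x u
  rw [← log_le_log_iff (mul_pos (pow_pos (hf.pos _) 2) (exp_pos _))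
      (mul_pos (hf.pos _) (hf.pos _)), log_mul (pow_pos (hf.pos _) 2).ne' (exp_pos _).ne',
    log_exp, log_pow, log_mul (hf.pos _).ne' (hf.pos _).ne']
  push_cast
  linarith

lemma convolutionExistsAt (hf : CentredDensity c v f) (hg : Integrable g) (x : ℝ) :
    ConvolutionExistsAt g f x (lsmul ℝ ℝ) volume :=
  convolutionExistsAt_of_abs_le hg hf.continuous hf.exists_abs_le.choose_spec x

lemma convolution_pos (hf : CentredDensity c v f) (hg : Integrable g) (hg0 : ∀ x, 0 < g x)
    (x : ℝ) : 0 < (g ⋆ f) x :=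
  integral_pos_of_forall_pos (hf.convolutionExistsAt hg x) fun _ => mul_pos (hg0 _) (hf.pos _)

/-- By Andréief's identity, total positivity of order two passes from the factors to the
convolution. -/
lemma convolution_mul_le_sq (hφ : CentredDensity a w φ) (hf : CentredDensity c v f) (x u : ℝ) :
    (φ ⋆ f) (x + u) * (φ ⋆ f) (x - u) ≤ (φ ⋆ f) x ^ 2 := by
  wlog hu : 0 ≤ u generalizing u
  · simpa only [mul_comm, sub_neg_eq_add, ← sub_eq_add_neg] using this (-u) (by linarith)
  have hint : ∀ s t, Integrable fun y => φ (y + s) * f (t - y) := fun s t =>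
    integrable_comp_add_mul_comp_sub (hf.convolutionExistsAt hφ.integrable _)
  have hminors : ∀ y z, 0 ≤ (φ (y + 0) * φ (z + u) - φ (z + 0) * φ (y + u)) *
      (f (x - y) * f (x - u - z) - f (x - z) * f (x - u - y)) := fun y z => by
    wlog hyz : y ≤ z generalizing y z
    · linarith [this z y (le_of_not_ge hyz)]
    have hφ' := hφ.mul_le_mul_of_add_eq (p := y + 0) (q := z + 0) (r := y + u) (s := z + u)
      (by linarith) (by linarith) (by ring)
    have hf' := hf.mul_le_mul_of_add_eq (p := x - u - z) (q := x - z) (r := x - u - y)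
      (s := x - y) (by linarith) (by linarith) (by ring)
    exact mul_nonneg_of_nonpos_of_nonpos (by linarith) (by linarith)
  have hle := andreief_le (hint 0 x) (hint 0 (x - u)) (hint u x) (hint u (x - u)) hminors
  simp only [integral_comp_add_mul_comp_sub] at hle
  rw [add_zero, add_zero, sub_add_cancel] at hle
  linarith

lemma sq_mul_exp_le_convolution_mul_add (hφ : CentredDensity a w φ) (hf : CentredDensity c v f)
    (x p q : ℝ) :
    (φ ⋆ f) x ^ 2 * exp (-(a * p ^ 2 + c * q ^ 2)) ≤
      (φ ⋆ f) (x + (p + q)) * (φ ⋆ f) (x - (p + q)) := by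
  set δ := exp (-(a * p ^ 2 + c * q ^ 2) / 2)
  have hδ : δ ^ 2 = exp (-(a * p ^ 2)) * exp (-(c * q ^ 2)) := by
    rw [← exp_nat_mul, ← exp_add]
    push_cast
    ring_nf
  have hint : ∀ s t, Integrable fun y => φ (y + s) * f (t - y) := fun s t =>
    integrable_comp_add_mul_comp_sub (hf.convolutionExistsAt hφ.integrable _)
  have hpos : ∀ s t y, 0 ≤ φ (y + s) * f (t - y) := fun s t y =>
    (mul_pos (hφ.pos _) (hf.pos _)).le
  have hpointwise : ∀ y, (δ * (φ y * f (x - y))) ^ 2 ≤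
      (φ (y + p) * f (x + q - y)) * (φ (y + -p) * f (x + -q - y)) := fun y => by
    calc (δ * (φ y * f (x - y))) ^ 2
        = φ y ^ 2 * exp (-(a * p ^ 2)) * (f (x - y) ^ 2 * exp (-(c * q ^ 2))) := by
          rw [mul_pow, hδ]
          ring
      _ ≤ φ (y + p) * φ (y - p) * (f (x - y + q) * f (x - y - q)) :=
          mul_le_mul (hφ.sq_mul_exp_le y p) (hf.sq_mul_exp_le (x - y) q)
            (mul_nonneg (sq_nonneg _) (exp_pos _).le) (mul_pos (hφ.pos _) (hφ.pos _)).le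
      _ = _ := by
          rw [sub_eq_add_neg y p, sub_add_eq_add_sub, sub_right_comm, sub_eq_add_neg x q]
          ring
  have hcs := sq_integral_le_mul_integral (hint p (x + q)) (hint (-p) (x + -q))
    ((convolutionExistsAt_iff.1 (hf.convolutionExistsAt hφ.integrable x)).const_mul δ)
    (hpos _ _) (hpos _ _) hpointwise
  simp only [integral_comp_add_mul_comp_sub] at hcs
  rwa [integral_const_mul, ← convolution_apply, mul_pow, hδ, ← exp_add, mul_comm, ← neg_add,
    show x + q + p = x + (p + q) by ring, show x + -q + -p = x - (p + q) by ring] at hcs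

/-- The shift `u` is split between the two factors in the proportion `c : a`, which minimises the
total loss. -/
lemma sq_mul_exp_le_convolution_mul (hφ : CentredDensity a w φ) (hf : CentredDensity c v f)
    (hac : a + c ≠ 0) (x u : ℝ) :
    (φ ⋆ f) x ^ 2 * exp (-(a * c / (a + c) * u ^ 2)) ≤ (φ ⋆ f) (x + u) * (φ ⋆ f) (x - u) := by
  have hsplit := hφ.sq_mul_exp_le_convolution_mul_add hf x (c / (a + c) * u) (a / (a + c) * u)
  have hshift : c / (a + c) * u + a / (a + c) * u = u := by
    field_simp
    ring
  have hloss : a * (c / (a + c) * u) ^ 2 + c * (a / (a + c) * u) ^ 2 =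
      a * c / (a + c) * u ^ 2 := by
    field_simp
    ring
  rwa [hshift, hloss] at hsplit

lemma convolution (hφ : CentredDensity a w φ) (hf : CentredDensity c v f) (hac : a + c ≠ 0) :
    CentredDensity (a * c / (a + c)) (w + v) (φ ⋆ f) where
  pos := hf.convolution_pos hφ.integrable hφ.pos
  smoothConvex := .neg_log (continuous_convolution_of_abs_le hφ.integrable hf.continuous
    hf.exists_abs_le.choose_spec) (hf.convolution_pos hφ.integrable hφ.pos)
    (hφ.convolution_mul_le_sq hf) (hφ.sq_mul_exp_le_convolution_mul hf hac)
  integrable := hφ.integrable.integrable_convolution _ hf.integrable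
  integrable_sq_mul := integrable_sq_mul_convolution hφ.integrable hf.integrable
    hφ.integrable_id_mul hf.integrable_id_mul hφ.integrable_sq_mul hf.integrable_sq_mul
  integral_eq_one := by
    rw [integral_convolution _ hφ.integrable hf.integrable, hφ.integral_eq_one,
      hf.integral_eq_one]
    simp
  integral_id_mul := by
    rw [integral_id_mul_convolution hφ.integrable hf.integrable hφ.integrable_id_mul
      hf.integrable_id_mul, hφ.integral_id_mul, hf.integral_id_mul]
    ring
  integral_sq_mul := by
    rw [integral_sq_mul_convolution hφ.integrable hf.integrable hφ.integrable_id_mul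
      hf.integrable_id_mul hφ.integrable_sq_mul hf.integrable_sq_mul, hφ.integral_eq_one,
      hf.integral_eq_one, hφ.integral_id_mul, hφ.integral_sq_mul, hf.integral_sq_mul]
    ring

lemma variance_pos (hf : CentredDensity c v f) : 0 < v := by
  rw [← hf.integral_sq_mul, integral_pos_iff_support_of_nonneg
    (fun x => mul_nonneg (sq_nonneg x) (hf.pos x).le) hf.integrable_sq_mul]
  have hsupport : (Function.support fun x => x ^ 2 * f x) = {0}ᶜ := by
    ext x
    simp [(hf.pos x).ne']
  rw [hsupport]
  exact isOpen_compl_singleton.measure_pos _ ⟨1, one_ne_zero⟩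

lemma integral_abs_mul_le (hf : CentredDensity c v f) : ∫ x, |x| * f x ≤ √v := by
  have hint : Integrable fun x => |x| * f x := hf.integrable_id_mul.abs.congr
    (ae_of_all _ fun x => by simp only [abs_mul, abs_of_pos (hf.pos x)])
  have hcs := sq_integral_le_mul_integral hf.integrable_sq_mul hf.integrable hint
    (fun x => mul_nonneg (sq_nonneg x) (hf.pos x).le) (fun x => (hf.pos x).le)
    fun x => by rw [mul_pow, sq_abs, sq (f x), mul_assoc]
  rw [hf.integral_sq_mul, hf.integral_eq_one, mul_one] at hcs
  exact le_sqrt_of_sq_le hcs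

lemma exists_log_slope (hf : CentredDensity c v f) : ∃ l : ℝ, |l| ≤ c * √v ∧
    ∀ x, f 0 * exp (l * x - c / 2 * x ^ 2) ≤ f x ∧ f x ≤ f 0 * exp (l * x) := by
  have hexp := fun x => congrFun hf.exp_neg_neg_log x
  refine ⟨-deriv (fun x => -log (f x)) 0, ?_, fun x => ?_⟩
  · have hscore := hf.smoothConvex.abs_deriv_mul_integral_le
      (by simpa only [hexp] using hf.integrable) (by simpa only [hexp] using hf.integrable_id_mul) 0
    simp only [hexp, hf.integral_eq_one, sub_zero, mul_one] at hscore
    rw [abs_neg]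
    exact hscore.trans
      (mul_le_mul_of_nonneg_left hf.integral_abs_mul_le hf.smoothConvex.nonneg)
  · obtain ⟨hlower, hupper⟩ := hf.smoothConvex.tangent_bounds 0 x
    rw [sub_zero] at hlower hupper
    rw [← exp_log (hf.pos 0), ← exp_log (hf.pos x), ← exp_add, ← exp_add, exp_le_exp, exp_le_exp]
    exact ⟨by linarith, by linarith⟩

lemma exists_abs_sub_affine_le (hf : CentredDensity c v f) : ∃ l : ℝ, ∀ x,
    |f x - f 0 * (1 + l * x)| ≤
      f 0 * (c / 2 + c ^ 2 * v) * (x ^ 2 * exp (c * √v * |x|)) := by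
  obtain ⟨l, hl, hbounds⟩ := hf.exists_log_slope
  have hc := hf.smoothConvex.nonneg
  have hv := hf.variance_pos.le
  have hf0 := hf.pos 0
  refine ⟨l, fun x => ?_⟩
  obtain ⟨hlower, hupper⟩ := hbounds x
  have hone : 1 ≤ exp (c * √v * |x|) := one_le_exp (by positivity)
  have hquad : c / 2 * x ^ 2 ≤ c / 2 * (x ^ 2 * exp (c * √v * |x|)) := by
    gcongr
    exact le_mul_of_one_le_right (sq_nonneg x) hone
  have hl2 : l ^ 2 ≤ c ^ 2 * v := by
    rw [← sq_abs, ← sq_sqrt hv, ← mul_pow]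
    gcongr
  have hrem : (l * x) ^ 2 * exp |l * x| ≤ c ^ 2 * v * (x ^ 2 * exp (c * √v * |x|)) := by
    rw [mul_pow, abs_mul, mul_assoc]
    gcongr
  have hexp_lower := add_one_le_exp (l * x - c / 2 * x ^ 2)
  have hexp_upper := exp_le_one_add_add_sq_mul_exp_abs (l * x)
  have hquad_nonneg : 0 ≤ c / 2 * (x ^ 2 * exp (c * √v * |x|)) := by positivity
  have hrem_nonneg : 0 ≤ c ^ 2 * v * (x ^ 2 * exp (c * √v * |x|)) := by positivity
  rw [abs_le, mul_assoc, ← mul_neg, le_sub_iff_add_le, sub_le_iff_le_add, ← mul_add, ← mul_add]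
  constructor
  · refine (mul_le_mul_of_nonneg_left ?_ hf0.le).trans hlower
    linarith
  · refine hupper.trans (mul_le_mul_of_nonneg_left ?_ hf0.le)
    linarith

/-- Annihilating the first two moments of `g` removes the affine part of `f` at the origin. -/
lemma abs_convolution_zero_le (hf : CentredDensity c v f) {g : ℝ → ℝ} (hg : HasExpMoments g)
    (hg0 : ∫ x, g x = 0) (hg1 : ∫ x, x * g x = 0) :
    |(g ⋆ f) 0| ≤ f 0 * (c / 2 + c ^ 2 * v) * ∫ x, |x ^ 2 * g x| * exp (c * √v * |x|) := by
  obtain ⟨l, hl⟩ := hf.exists_abs_sub_affine_le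
  have hconv := convolutionExistsAt_iff.1 (hf.convolutionExistsAt hg.integrable 0)
  have haffine : (g ⋆ f) 0 = ∫ x, g x * (f (0 - x) - f 0 * (1 + l * (0 - x))) := by
    have hsplit : ∀ x, g x * (f (0 - x) - f 0 * (1 + l * (0 - x))) =
        g x * f (0 - x) - (f 0 * g x - f 0 * l * (x * g x)) := fun x => by ring
    simp only [hsplit]
    rw [integral_sub hconv ((hg.integrable.const_mul _).sub' (hg.id_mul.integrable.const_mul _)),
      integral_sub (hg.integrable.const_mul _) (hg.id_mul.integrable.const_mul _),
      integral_const_mul, integral_const_mul, hg0, hg1, convolution_apply]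
    ring
  rw [haffine, ← integral_const_mul, ← norm_eq_abs]
  refine norm_integral_le_of_norm_le (((hg.pow_mul 2).integrable_abs_mul_exp _).const_mul _)
    (ae_of_all _ fun x => ?_)
  rw [norm_mul, norm_eq_abs, norm_eq_abs]
  refine (mul_le_mul_of_nonneg_left (hl (0 - x)) (abs_nonneg _)).trans_eq ?_
  rw [zero_sub, abs_neg, neg_sq, abs_mul, abs_of_nonneg (sq_nonneg x)]
  ring

/-- Jensen's inequality for the exponential lower bound on `f`. -/
lemma mul_exp_le_convolution_zero (hφ : CentredDensity a w φ) (hf : CentredDensity c v f) :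
    f 0 * exp (-(c / 2 * w)) ≤ (φ ⋆ f) 0 := by
  obtain ⟨l, -, hbounds⟩ := hf.exists_log_slope
  have h1 := hφ.integrable_id_mul.const_mul (-l)
  have h2 := hφ.integrable_sq_mul.const_mul (c / 2)
  have hsplit : ∀ x, (l * (0 - x) - c / 2 * (0 - x) ^ 2) * φ x =
      -l * (x * φ x) - c / 2 * (x ^ 2 * φ x) := fun x => by ring
  have hjensen := exp_mul_integral_le_integral (m := -(c / 2 * w))
    (g := fun x => l * (0 - x) - c / 2 * (0 - x) ^ 2) (h := fun x => (f 0)⁻¹ * (φ x * f (0 - x)))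
    (fun x => (hφ.pos x).le) hφ.integrable (by simpa only [hsplit] using h1.sub' h2)
    ((convolutionExistsAt_iff.1 (hf.convolutionExistsAt hφ.integrable 0)).const_mul _)
    (by
      simp only [hsplit]
      rw [integral_sub h1 h2, integral_const_mul, integral_const_mul, hφ.integral_id_mul,
        hφ.integral_sq_mul, hφ.integral_eq_one]
      ring)
    fun x => by
      rw [le_inv_mul_iff₀ (hf.pos 0), mul_comm (φ x), ← mul_assoc]
      exact mul_le_mul_of_nonneg_right (hbounds (0 - x)).1 (hφ.pos x).le
  rwa [hφ.integral_eq_one, mul_one, integral_const_mul, ← convolution_apply,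
    le_inv_mul_iff₀ (hf.pos 0)] at hjensen

/-- Concavity constants combine harmonically under convolution, hence the decay in `n`. -/
lemma centredDensity_convPow (hφ : CentredDensity a w φ) (ha : 0 < a) (n : ℕ) :
    CentredDensity (a / (n + 1)) ((n + 1) * w) (convPow φ n) := by
  induction n with
  | zero => simpa [convPow] using hφ
  | succ n ih =>
    convert hφ.convolution ih (by positivity) using 1
    · push_cast
      field_simp
    · push_cast
      ring
    · rfl

/-- The exchangeability of the summands `X₀, …, Xₙ₊₁`: given their sum `x`, each of them has mean
`x / (n + 2)`. -/
lemma id_mul_convPow_succ (hφ : CentredDensity a w φ) (ha : 0 < a) (n : ℕ) :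
    (fun x => x * convPow φ (n + 1) x) =
      ((n : ℝ) + 2) • ((fun y => y * φ y) ⋆ convPow φ n) := by
  have hsplit : ∀ n, (fun x => x * convPow φ (n + 1) x) =
      ((fun y => y * φ y) ⋆ convPow φ n) + φ ⋆ fun y => y * convPow φ n y :=
    fun n => funext fun x => id_mul_convolution
      ((hφ.centredDensity_convPow ha n).convolutionExistsAt hφ.integrable_id_mul x)
      (convolutionExistsAt_symm.1
        (hφ.convolutionExistsAt (hφ.centredDensity_convPow ha n).integrable_id_mul x))
  induction n with
  | zero =>
    rw [hsplit, convPow, convolution_comm φ]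
    simp [two_smul]
  | succ n ih =>
    obtain ⟨B, hB⟩ := (hφ.centredDensity_convPow ha n).exists_abs_le
    rw [hsplit, ih, convolution_smul, convolution_left_comm hφ.integrable hφ.integrable_id_mul
      (hφ.centredDensity_convPow ha n).continuous hB, ← convPow]
    push_cast
    module

lemma id_mul_convolution_convPow_zero (hφ : CentredDensity a w φ) (ha : 0 < a) (n : ℕ) :
    ((fun y => y * φ y) ⋆ convPow φ n) 0 = 0 := by
  have hzero := congrFun (hφ.id_mul_convPow_succ ha n) 0
  rw [zero_mul, Pi.smul_apply, smul_eq_mul, eq_comm, mul_eq_zero] at hzero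
  exact hzero.resolve_left (by positivity)

/-- Subtracting from `k` multiples of `φ` and `x * φ x` makes its first two moments vanish. Neither
correction contributes an error, the second one by exchangeability. -/
lemma exists_convolution_zero_sub_mul_eq (hφ : CentredDensity a w φ) (ha : 0 < a)
    (hφexp : HasExpMoments φ) {k : ℝ → ℝ} (hk : HasExpMoments k) :
    ∃ g, HasExpMoments g ∧ ∫ x, g x = 0 ∧ ∫ x, x * g x = 0 ∧ ∀ n,
      (g ⋆ convPow φ n) 0 =
        (k ⋆ convPow φ n) 0 - (∫ x, k x) * (φ ⋆ convPow φ n) 0 := by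
  set R := ∫ x, k x
  set s := (∫ x, x * k x) / w
  have hs : s * w = ∫ x, x * k x := div_mul_cancel₀ _ hφ.variance_pos.ne'
  have hRφ := hφexp.const_mul R
  have hsφ := hφexp.id_mul.const_mul s
  refine ⟨fun x => k x - R * φ x - s * (x * φ x), (hk.sub hRφ).sub hsφ, ?_, ?_, fun n => ?_⟩
  · rw [integral_sub (hk.sub hRφ).integrable hsφ.integrable,
      integral_sub hk.integrable hRφ.integrable, integral_const_mul, integral_const_mul,
      hφ.integral_eq_one, hφ.integral_id_mul]
    ring
  · have hsplit : ∀ x, x * (k x - R * φ x - s * (x * φ x)) =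
        x * k x - R * (x * φ x) - s * (x ^ 2 * φ x) := fun x => by ring
    have h1 := hφ.integrable_id_mul.const_mul R
    simp only [hsplit]
    rw [integral_sub (hk.id_mul.integrable.sub' h1) (hφ.integrable_sq_mul.const_mul s),
      integral_sub hk.id_mul.integrable h1, integral_const_mul, integral_const_mul,
      hφ.integral_id_mul, hφ.integral_sq_mul]
    linarith
  · have hexists : ∀ {g}, Integrable g → Integrable fun x => g x * convPow φ n (0 - x) := fun hg =>
      convolutionExistsAt_iff.1 ((hφ.centredDensity_convPow ha n).convolutionExistsAt hg 0)
    have hmean := hφ.id_mul_convolution_convPow_zero ha n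
    rw [convolution_apply] at hmean
    simp only [convolution_apply, sub_mul, mul_assoc R]
    rw [integral_sub ((hexists hk.integrable).sub' ((hexists hφ.integrable).const_mul R)) ?_,
      integral_sub (hexists hk.integrable) ((hexists hφ.integrable).const_mul R)]
    · simp only [mul_assoc s, integral_const_mul, hmean]
      ring
    · simpa only [mul_assoc s] using (hexists hφ.integrable_id_mul).const_mul s

/-- Both terms of the second-order error are `O(1 / n)`: the concavity constant of `convPow φ n` and
the product of its square with the variance. -/
lemma isBigO_convolution_convPow_div_sub (hφ : CentredDensity a w φ) (ha : 0 < a)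
    (hφexp : HasExpMoments φ) {k : ℝ → ℝ} (hk : HasExpMoments k) :
    (fun n : ℕ => (k ⋆ convPow φ n) 0 / (φ ⋆ convPow φ n) 0 - ∫ x, k x)
      =O[atTop] fun n : ℕ => ((n : ℝ) + 1)⁻¹ := by
  obtain ⟨g, hg, hg0, hg1, hconv⟩ := hφ.exists_convolution_zero_sub_mul_eq ha hφexp hk
  have hw := hφ.variance_pos
  set I := ∫ x, |x ^ 2 * g x| * exp (a * √w * |x|)
  refine Asymptotics.isBigO_of_le' (c := (a / 2 + a ^ 2 * w) * I * exp (a / 2 * w)) _ fun n => ?_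
  have hn : (1 : ℝ) ≤ n + 1 := by linarith [n.cast_nonneg (α := ℝ)]
  set M : ℝ := n + 1
  have hM : 0 < M := by linarith
  have hf := hφ.centredDensity_convPow ha n
  have hpos := hf.convolution_pos hφ.integrable hφ.pos 0
  have hfac : a / M / 2 + (a / M) ^ 2 * (M * w) = (a / 2 + a ^ 2 * w) * M⁻¹ := by
    field_simp
  have : 0 ≤ I := integral_nonneg fun x => by positivity
  have hrate : a / M * √(M * w) ≤ a * √w := by
    rw [sqrt_mul hM.le, div_mul_eq_mul_div, div_le_iff₀ hM, ← mul_assoc, mul_right_comm]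
    gcongr
    exact sqrt_le_iff.2 ⟨hM.le, by nlinarith⟩
  have hint_le := (hg.pow_mul 2).integral_abs_mul_exp_mono hrate
  have hnum : |(g ⋆ convPow φ n) 0| ≤ convPow φ n 0 * ((a / 2 + a ^ 2 * w) * M⁻¹) * I := by
    refine (hf.abs_convolution_zero_le hg hg0 hg1).trans ?_
    rw [hfac]
    have := (hf.pos 0).le
    gcongr
  have hden : convPow φ n 0 ≤ exp (a / 2 * w) * (φ ⋆ convPow φ n) 0 := by
    have hlower := hφ.mul_exp_le_convolution_zero hf
    rw [exp_neg, ← div_eq_mul_inv, div_le_iff₀' (exp_pos _)] at hlower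
    refine hlower.trans (mul_le_mul_of_nonneg_right (exp_le_exp.2 ?_) hpos.le)
    gcongr
    exact div_le_self ha.le hn
  rw [div_sub' hpos.ne', mul_comm _ (∫ x, k x), ← hconv, norm_div, norm_of_nonneg hpos.le,
    div_le_iff₀ hpos, norm_eq_abs, norm_of_nonneg (by positivity)]
  calc |(g ⋆ convPow φ n) 0| ≤ convPow φ n 0 * ((a / 2 + a ^ 2 * w) * M⁻¹) * I := hnum
    _ ≤ exp (a / 2 * w) * (φ ⋆ convPow φ n) 0 * ((a / 2 + a ^ 2 * w) * M⁻¹) * I := by gcongr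
    _ = _ := by ring

end CentredDensity

/-! ### Tilting and the strain energy -/

section Tilt

variable {c : ℝ} {V : ℝ → ℝ}

lemma HasExpMoments.exp_neg_add_mul (hV : HasExpMoments fun x => exp (-V x)) (σ : ℝ) :
    HasExpMoments fun x => exp (-V x + σ * x) := by
  simpa only [exp_add, mul_comm] using hV.exp_mul σ

lemma HasExpMoments.hasDerivAt_integral_exp_mul {k : ℝ → ℝ} (hk : HasExpMoments k) (σ : ℝ) :
    HasDerivAt (fun t => ∫ x, exp (t * x) * k x) (∫ x, exp (σ * x) * (x * k x)) σ := by
  refine (hasDerivAt_integral_of_dominated_loc_of_deriv_le (Metric.ball_mem_nhds σ one_pos)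
    (F' := fun t x => exp (t * x) * (x * k x))
    (Eventually.of_forall fun t => (hk.exp_mul t).integrable.1) (hk.exp_mul σ).integrable
    (hk.id_mul.exp_mul σ).integrable.1 (ae_of_all _ fun x t ht => ?_)
    (hk.id_mul.integrable_abs_mul_exp (|σ| + 1)) (ae_of_all _ fun x t _ => ?_)).2
  · have ht : |t| ≤ |σ| + 1 := by
      rw [Metric.mem_ball, dist_eq] at ht
      linarith [abs_sub_abs_le_abs_sub t σ]
    rw [norm_mul, norm_eq_abs, norm_eq_abs, abs_exp, mul_comm]
    refine mul_le_mul_of_nonneg_left (exp_le_exp.2 ?_) (abs_nonneg _)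
    calc t * x ≤ |t| * |x| := (le_abs_self _).trans_eq (abs_mul t x)
      _ ≤ (|σ| + 1) * |x| := by gcongr
  · exact (((hasDerivAt_id t).mul_const x).exp.mul_const (k x)).congr_deriv (by simp [mul_assoc])

/-- The logarithm of the partition function of a single bond with energy `V` pulled by the
force `σ`; its Legendre transform is the Cauchy–Born energy `W V`. -/
def logPartition (V : ℝ → ℝ) (σ : ℝ) : ℝ :=
  log (∫ y, exp (-V y + σ * y))

lemma hasDerivAt_logPartition (hV : HasExpMoments fun x => exp (-V x)) (σ : ℝ) :
    HasDerivAt (logPartition V)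
      ((∫ y, y * exp (-V y + σ * y)) / ∫ y, exp (-V y + σ * y)) σ := by
  have hpos : 0 < ∫ y, exp (-V y + σ * y) := integral_exp_pos (hV.exp_neg_add_mul σ).integrable
  have hderiv := hV.hasDerivAt_integral_exp_mul σ
  simp only [mul_left_comm (exp _), ← exp_add, add_comm _ (-V _)] at hderiv
  exact hderiv.log hpos.ne'

/-- Translate the integration variable by `τ / c`, bound `V` by its tangent parabola and apply
Jensen's inequality. -/
lemma SmoothConvex.integral_exp_neg_mul_exp_le (hV : SmoothConvex c V) (hc : 0 < c) {m τ : ℝ}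
    (h0 : Integrable fun x => exp (-V x)) (h1 : Integrable fun x => x * exp (-V x))
    (hτ : Integrable fun x => exp (-V x + τ * x))
    (hm : ∫ x, x * exp (-V x) = m * ∫ x, exp (-V x)) :
    exp (τ * m + τ ^ 2 / (2 * c)) * ∫ x, exp (-V x) ≤ ∫ x, exp (-V x + τ * x) := by
  have hscore := (hV.integrable_deriv_mul_exp_neg h0 h1).const_mul (τ / c)
  have hsplit : ∀ x, (τ * x - τ / c * deriv V x + τ ^ 2 / (2 * c)) * exp (-V x) =
      τ * (x * exp (-V x)) - τ / c * (deriv V x * exp (-V x)) +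
        τ ^ 2 / (2 * c) * exp (-V x) := fun x => by ring
  rw [← integral_add_right_eq_self (fun x => exp (-V x + τ * x)) (τ / c)]
  refine exp_mul_integral_le_integral (fun x => (exp_pos _).le)
    (g := fun x => τ * x - τ / c * deriv V x + τ ^ 2 / (2 * c)) h0 ?_
    (hτ.comp_add_right (τ / c)) ?_ fun x => ?_
  · simp only [hsplit]
    exact ((h1.const_mul τ).sub' hscore).fun_add (h0.const_mul _)
  · simp only [hsplit]
    rw [integral_add ((h1.const_mul τ).sub' hscore) (h0.const_mul _),
      integral_sub (h1.const_mul τ) hscore, integral_const_mul, integral_const_mul,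
      integral_const_mul, hm, hV.integral_deriv_mul_exp_neg h0 h1]
    ring
  · rw [← exp_add, exp_le_exp]
    have htangent := (hV.tangent_bounds x (x + τ / c)).2
    have hsq : c / 2 * (τ / c) ^ 2 = τ ^ 2 / (2 * c) := by field_simp
    have hlin : τ * (τ / c) = 2 * (τ ^ 2 / (2 * c)) := by field_simp
    rw [add_sub_cancel_left, hsq] at htangent
    linarith

lemma SmoothConvex.logPartition_add_le (hV : SmoothConvex c V) (hc : 0 < c)
    (hexp : HasExpMoments fun x => exp (-V x)) {A σ : ℝ}
    (hσ : ∫ y, y * exp (-V y + σ * y) = A * ∫ y, exp (-V y + σ * y)) (τ : ℝ) :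
    logPartition V σ + (τ - σ) * A + (τ - σ) ^ 2 / (2 * c) ≤ logPartition V τ := by
  have htilt : SmoothConvex c fun x => V x - σ * x := by simpa using hV.translate 0 σ 0
  have hneg : ∀ y, -(V y - σ * y) = -V y + σ * y := fun y => by ring
  have hadd : ∀ y, -V y + σ * y + (τ - σ) * y = -V y + τ * y := fun y => by ring
  have hpos := integral_exp_pos (hexp.exp_neg_add_mul σ).integrable
  have hle := htilt.integral_exp_neg_mul_exp_le hc (m := A) (τ := τ - σ)
  simp only [hneg, hadd] at hle
  have hlog := log_le_log (mul_pos (exp_pos _) hpos)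
    (hle (hexp.exp_neg_add_mul σ).integrable (hexp.exp_neg_add_mul σ).id_mul.integrable
      (hexp.exp_neg_add_mul τ).integrable hσ)
  rw [log_mul (exp_pos _).ne' hpos.ne', log_exp] at hlog
  simp only [logPartition]
  linarith

/-- The force producing the mean bond length `A` minimises `τ ↦ logPartition V τ - τ * A`. -/
lemma SmoothConvex.exists_mean_eq (hV : SmoothConvex c V) (hc : 0 < c)
    (hexp : HasExpMoments fun x => exp (-V x)) (A : ℝ) :
    ∃ σ, ∫ y, y * exp (-V y + σ * y) = A * ∫ y, exp (-V y + σ * y) := by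
  have hpos : ∀ σ, 0 < ∫ y, exp (-V y + σ * y) := fun σ =>
    integral_exp_pos (hexp.exp_neg_add_mul σ).integrable
  have hderiv : ∀ σ, HasDerivAt (fun τ => logPartition V τ - τ * A) _ σ := fun σ =>
    (hasDerivAt_logPartition hexp σ).sub ((hasDerivAt_id σ).mul_const A)
  set m := (∫ y, y * exp (-V y + 0 * y)) / ∫ y, exp (-V y + 0 * y)
  have hquad := hV.logPartition_add_le hc hexp (A := m) (σ := 0)
    (div_mul_cancel₀ _ (hpos 0).ne').symm
  have hcoercive : ∀ᶠ τ in cocompact ℝ,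
      logPartition V 0 - 0 * A ≤ logPartition V τ - τ * A := by
    filter_upwards [tendsto_norm_cocompact_atTop.eventually_ge_atTop (2 * c * |m - A|)] with τ hτ
    have hle : |τ| * |m - A| ≤ τ ^ 2 / (2 * c) := by
      rw [le_div_iff₀ (by positivity), ← sq_abs, sq]
      calc |τ| * |m - A| * (2 * c) = |τ| * (2 * c * |m - A|) := by ring
        _ ≤ |τ| * |τ| := mul_le_mul_of_nonneg_left hτ (abs_nonneg τ)
    have hprod := neg_abs_le (τ * (m - A))
    rw [abs_mul] at hprod
    have := hquad τ
    rw [sub_zero] at this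
    linarith
  obtain ⟨σ, hσ⟩ := (continuous_iff_continuousAt.2 fun σ =>
    (hderiv σ).continuousAt).exists_forall_le' 0 hcoercive
  have hzero := IsLocalMin.hasDerivAt_eq_zero (Eventually.of_forall hσ) (hderiv σ)
  rw [one_mul, sub_eq_zero, div_eq_iff (hpos σ).ne'] at hzero
  exact ⟨σ, hzero⟩

/-- A quadratic lower bound on `L` is dual to a quadratic upper bound on its Legendre transform. -/
lemma hasDerivAt_iSup_of_quadratic_le {L : ℝ → ℝ} {A σ : ℝ} (hc : 0 < c)
    (hL : ∀ τ, L σ + (τ - σ) * A + (τ - σ) ^ 2 / (2 * c) ≤ L τ) :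
    HasDerivAt (fun B => ⨆ τ, (τ * B - L τ)) σ A := by
  have hupper : ∀ B τ, τ * B - L τ ≤ σ * B - L σ + c / 2 * (B - A) ^ 2 := fun B τ => by
    have hsq : 0 ≤ (τ - σ - c * (B - A)) ^ 2 / (2 * c) := by positivity
    have hexpand : (τ - σ - c * (B - A)) ^ 2 / (2 * c) =
        (τ - σ) ^ 2 / (2 * c) - (τ - σ) * (B - A) + c / 2 * (B - A) ^ 2 := by
      field_simp
      ring
    linarith [hL τ]
  have hle : ∀ B, ⨆ τ, (τ * B - L τ) ≤ σ * B - L σ + c / 2 * (B - A) ^ 2 := fun B =>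
    ciSup_le (hupper B)
  have hge : ∀ B, σ * B - L σ ≤ ⨆ τ, (τ * B - L τ) := fun B =>
    le_ciSup (f := fun τ => τ * B - L τ) ⟨_, Set.forall_mem_range.2 (hupper B)⟩ σ
  have hA : ⨆ τ, (τ * A - L τ) = σ * A - L σ := le_antisymm (by simpa using hle A) (hge A)
  refine hasDerivAt_of_abs_sub_le_sq (C := c / 2) fun B => ?_
  rw [hA, abs_le]
  have hnonneg : 0 ≤ c / 2 * (B - A) ^ 2 := by positivity
  constructor <;> linarith [hle B, hge B]

lemma SmoothConvex.hasDerivAt_W (hV : SmoothConvex c V) (hc : 0 < c)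
    (hexp : HasExpMoments fun x => exp (-V x)) {A σ : ℝ}
    (hσ : ∫ y, y * exp (-V y + σ * y) = A * ∫ y, exp (-V y + σ * y)) :
    HasDerivAt (W V) σ A :=
  hasDerivAt_iSup_of_quadratic_le hc (hV.logPartition_add_le hc hexp hσ)

end Tilt

/-! ### Partition functions of the chain -/

section Chain

lemma bc_zero (n : ℕ) (b : ℝ) (u : Fin (n - 1) → ℝ) : bc n b u 0 = 0 := by
  simp [bc]

lemma bc_of_pos_of_le {n i : ℕ} (hn : 0 < n) (hi : n ≤ i) (b : ℝ) (u : Fin (n - 1) → ℝ) :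
    bc n b u i = b := by
  simp [bc, hi.not_gt, (hn.trans_le hi).ne']

lemma bc_add_mul {n i : ℕ} (hn : 0 < n) (hi : i ≤ n) (A : ℝ) (v : Fin (n - 1) → ℝ) :
    bc n (n * A) (fun j => v j + ((j : ℝ) + 1) * A) i = bc n 0 v i + i * A := by
  rcases Nat.eq_zero_or_pos i with rfl | hpos
  · simp [bc_zero]
  rcases hi.eq_or_lt with rfl | hlt
  · simp [bc_of_pos_of_le hn le_rfl]
  · simp [bc, hpos, hlt, Nat.cast_sub (Nat.one_le_of_lt hpos)]

lemma bc_cons (m i : ℕ) (b y : ℝ) (u : Fin m → ℝ) :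
    bc (m + 2) b (Fin.cons y (u + fun _ => y) : Fin (m + 1) → ℝ) (i + 1) =
      bc (m + 1) (b - y) u i + y := by
  rcases i with _ | i
  · simp [bc]
  rcases lt_or_ge i m with hlt | hge
  · simp only [bc, Nat.succ_pos, Nat.add_lt_add_iff_right, hlt, and_self, dif_pos]
    exact Fin.cons_succ (α := fun _ => ℝ) y (u + fun _ => y) ⟨i, hlt⟩
  · rw [bc_of_pos_of_le (by omega) (by omega), bc_of_pos_of_le (by omega) (by omega),
      sub_add_cancel]

lemma measurable_bc (n : ℕ) (b : ℝ) (i : ℕ) : Measurable fun u => bc n b u i := by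
  unfold bc
  split_ifs <;> fun_prop

lemma measurable_prod_bc {M : Type*} [CommMonoid M] [MeasurableSpace M] [MeasurableMul₂ M]
    {f : ℝ → M} (hf : Measurable f) (n j m : ℕ) (b : ℝ) :
    Measurable fun u => ∏ i ∈ Finset.range m, f (bc n b u (i + j + 1) - bc n b u (i + j)) :=
  Finset.measurable_fun_prod _ fun i _ =>
    hf.comp (.sub (measurable_bc n b (i + j + 1)) (measurable_bc n b (i + j)))

open scoped ENNReal

/-- Integrating out `u 0` after moving the remaining coordinates into the frame of `u 0`. -/
lemma lintegral_fin_succ_eq_lintegral_cons_add {m : ℕ} {F : (Fin (m + 1) → ℝ) → ℝ≥0∞}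
    (hF : AEMeasurable F) :
    ∫⁻ u, F u = ∫⁻ y, ∫⁻ u : Fin m → ℝ, F (Fin.cons y (u + fun _ => y)) := by
  have hcons := (volume_preserving_piFinSuccAbove (fun _ : Fin (m + 1) => ℝ) 0).symm
  rw [← hcons.lintegral_comp_emb (MeasurableEquiv.measurableEmbedding _), Measure.volume_eq_prod]
  refine (lintegral_prod _
    (hF.comp_quasiMeasurePreserving hcons.quasiMeasurePreserving)).trans ?_
  refine lintegral_congr fun y => ?_
  simp only [Function.comp_apply, MeasurableEquiv.piFinSuccAbove_symm_apply,
    Fin.insertNthEquiv_zero]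
  exact (lintegral_add_right_eq_self (μ := volume) (fun u : Fin m → ℝ => F (Fin.cons y u))
    fun _ => y).symm

lemma lintegral_mul_prod_bc {q f : ℝ → ℝ≥0∞} (hq : AEMeasurable q) (hf : Measurable f) (m : ℕ)
    (b : ℝ) :
    ∫⁻ u : Fin (m + 1) → ℝ, q (bc (m + 2) b u 1) *
        ∏ i ∈ Finset.range (m + 1), f (bc (m + 2) b u (i + 2) - bc (m + 2) b u (i + 1)) =
      ∫⁻ y, q y * ∫⁻ u : Fin m → ℝ,
        ∏ i ∈ Finset.range (m + 1), f (bc (m + 1) (b - y) u (i + 1) - bc (m + 1) (b - y) u i) := by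
  rw [lintegral_fin_succ_eq_lintegral_cons_add]
  · refine lintegral_congr fun y => ?_
    simp only [bc_cons, add_sub_add_right_eq_sub, bc_zero, zero_add]
    exact lintegral_const_mul (q y) (measurable_prod_bc hf (m + 1) 0 (m + 1) (b - y))
  · refine AEMeasurable.mul ?_ (measurable_prod_bc hf (m + 2) 1 (m + 1) b).aemeasurable
    exact hq.comp_quasiMeasurePreserving (Measure.quasiMeasurePreserving_eval _ (0 : Fin (m + 1)))

variable {f k : ℝ → ℝ}

lemma convPow_nonneg (hf : ∀ x, 0 ≤ f x) (n : ℕ) (x : ℝ) : 0 ≤ convPow f n x := by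
  induction n generalizing x with
  | zero => exact hf x
  | succ n ih => exact integral_nonneg fun y => mul_nonneg (hf y) (ih (x - y))

lemma lintegral_ofReal_mul_ofReal_eq {g : ℝ → ℝ} (hf : ∀ x, 0 ≤ f x) (hg : ∀ x, 0 ≤ g x) {x : ℝ}
    (hfg : ConvolutionExistsAt f g x (lsmul ℝ ℝ) volume) :
    ∫⁻ y, ENNReal.ofReal (f y) * ENNReal.ofReal (g (x - y)) = ENNReal.ofReal ((f ⋆ g) x) := by
  simp only [← ENNReal.ofReal_mul (hf _)]
  exact (ofReal_integral_eq_lintegral_ofReal hfg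
    (ae_of_all _ fun y => mul_nonneg (hf y) (hg (x - y)))).symm

lemma lintegral_prod_bc_eq_convPow (hf : Measurable f) (hf0 : ∀ x, 0 ≤ f x)
    (hconv : ∀ n, ConvolutionExists f (convPow f n) (lsmul ℝ ℝ) volume) (m : ℕ) (b : ℝ) :
    ∫⁻ u : Fin m → ℝ, ∏ i ∈ Finset.range (m + 1),
        ENNReal.ofReal (f (bc (m + 1) b u (i + 1) - bc (m + 1) b u i)) =
      ENNReal.ofReal (convPow f m b) := by
  induction m generalizing b with
  | zero => simp [bc, volume_pi, convPow]
  | succ m ih =>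
    have hsplit : ∀ u : Fin (m + 1) → ℝ, ∏ i ∈ Finset.range (m + 2),
        ENNReal.ofReal (f (bc (m + 2) b u (i + 1) - bc (m + 2) b u i)) =
          ENNReal.ofReal (f (bc (m + 2) b u 1)) * ∏ i ∈ Finset.range (m + 1),
            ENNReal.ofReal (f (bc (m + 2) b u (i + 2) - bc (m + 2) b u (i + 1))) := fun u => by
      rw [Finset.prod_range_succ', bc_zero, sub_zero, mul_comm]
    simp only [hsplit]
    rw [lintegral_mul_prod_bc (q := fun x => ENNReal.ofReal (f x))
      (f := fun x => ENNReal.ofReal (f x)) hf.ennreal_ofReal.aemeasurable hf.ennreal_ofReal]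
    simp only [ih]
    exact lintegral_ofReal_mul_ofReal_eq hf0 (convPow_nonneg hf0 m) (hconv m b)

lemma integral_mul_prod_bc_eq_convolution (hk : AEStronglyMeasurable k) (hk0 : ∀ x, 0 ≤ k x)
    (hf : Measurable f) (hf0 : ∀ x, 0 ≤ f x)
    (hconv : ∀ n, ConvolutionExists f (convPow f n) (lsmul ℝ ℝ) volume) (m : ℕ) (b : ℝ)
    (hkconv : ConvolutionExistsAt k (convPow f m) b (lsmul ℝ ℝ) volume) :
    ∫ u : Fin (m + 1) → ℝ, k (bc (m + 2) b u 1) *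
        ∏ i ∈ Finset.range (m + 1), f (bc (m + 2) b u (i + 2) - bc (m + 2) b u (i + 1)) =
      (k ⋆ convPow f m) b := by
  have hk1 : AEStronglyMeasurable fun u : Fin (m + 1) → ℝ => k (bc (m + 2) b u 1) :=
    hk.comp_quasiMeasurePreserving (Measure.quasiMeasurePreserving_eval _ (0 : Fin (m + 1)))
  rw [integral_eq_lintegral_of_nonneg_ae
    (ae_of_all _ fun u => mul_nonneg (hk0 _) (Finset.prod_nonneg fun _ _ => hf0 _))
    (hk1.mul (measurable_prod_bc hf (m + 2) 1 (m + 1) b).aestronglyMeasurable)]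
  simp only [ENNReal.ofReal_mul (hk0 _), ENNReal.ofReal_prod_of_nonneg fun _ _ => hf0 _]
  rw [lintegral_mul_prod_bc (q := fun x => ENNReal.ofReal (k x))
    (f := fun x => ENNReal.ofReal (f x)) hk.aemeasurable.ennreal_ofReal hf.ennreal_ofReal]
  simp only [lintegral_prod_bc_eq_convPow hf hf0 hconv]
  rw [lintegral_ofReal_mul_ofReal_eq hk0 (convPow_nonneg hf0 m) hkconv, ENNReal.toReal_ofReal]
  exact integral_nonneg fun y => mul_nonneg (hk0 y) (convPow_nonneg hf0 m (b - y))

end Chain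

section FreeEnergy

/-- The Gibbs weight `exp (-V y + σ * y)` of a bond with energy `V` under the force `σ`, as a
function of the deviation `x = y - A` and relative to the partition function of a bond with
energy `ψ`. It is the density of the bond fluctuations in the bulk for `V = ψ`, and at the defect
for `V = ψ + P`. -/
def bondWeight (ψ V : ℝ → ℝ) (σ A x : ℝ) : ℝ :=
  (∫ y, exp (-ψ y + σ * y))⁻¹ * exp (-V (x + A) + σ * (x + A))

variable {ψ V : ℝ → ℝ} {c σ A : ℝ}

lemma hasExpMoments_bondWeight (hV : HasExpMoments fun x => exp (-V x)) :
    HasExpMoments (bondWeight ψ V σ A) :=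
  ((hV.exp_neg_add_mul σ).comp_add_right A).const_mul _

lemma integral_bondWeight :
    ∫ x, bondWeight ψ V σ A x = (∫ y, exp (-V y + σ * y)) / ∫ y, exp (-ψ y + σ * y) := by
  simp only [bondWeight]
  rw [integral_const_mul, integral_add_right_eq_self (fun y => exp (-V y + σ * y)),
    inv_mul_eq_div]

lemma bondWeight_pos (hψ : HasExpMoments fun x => exp (-ψ x)) (x : ℝ) :
    0 < bondWeight ψ V σ A x :=
  mul_pos (inv_pos.2 (integral_exp_pos (hψ.exp_neg_add_mul σ).integrable)) (exp_pos _)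

lemma exp_neg_add_eq_mul_bondWeight (hψ : HasExpMoments fun x => exp (-ψ x)) (x : ℝ) :
    exp (-V (x + A)) =
      (∫ y, exp (-ψ y + σ * y)) * exp (-(σ * (x + A))) * bondWeight ψ V σ A x := by
  have hpos := integral_exp_pos (hψ.exp_neg_add_mul σ).integrable
  rw [bondWeight, exp_add, exp_neg (σ * (x + A))]
  field_simp

lemma integral_id_mul_bondWeight (hψ : HasExpMoments fun x => exp (-ψ x))
    (hσ : ∫ y, y * exp (-ψ y + σ * y) = A * ∫ y, exp (-ψ y + σ * y)) :
    ∫ x, x * bondWeight ψ ψ σ A x = 0 := by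
  have htilt := hψ.exp_neg_add_mul σ
  have hshift : ∀ x, x * bondWeight ψ ψ σ A x = (∫ y, exp (-ψ y + σ * y))⁻¹ *
      ((x + A - A) * exp (-ψ (x + A) + σ * (x + A))) := fun x => by
    rw [bondWeight, add_sub_cancel_right]
    ring
  simp only [hshift]
  rw [integral_const_mul, integral_add_right_eq_self (fun y => (y - A) * exp (-ψ y + σ * y))]
  simp only [sub_mul]
  rw [integral_sub htilt.id_mul.integrable (htilt.integrable.const_mul A), integral_const_mul, hσ,
    sub_self, mul_zero]

lemma SmoothConvex.centredDensity_bondWeight (hψ : SmoothConvex c ψ)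
    (hexp : HasExpMoments fun x => exp (-ψ x))
    (hσ : ∫ y, y * exp (-ψ y + σ * y) = A * ∫ y, exp (-ψ y + σ * y)) :
    CentredDensity c (∫ x, x ^ 2 * bondWeight ψ ψ σ A x) (bondWeight ψ ψ σ A) where
  pos := bondWeight_pos hexp
  smoothConvex := by
    have hpos := integral_exp_pos (hexp.exp_neg_add_mul σ).integrable
    convert hψ.translate A σ (log (∫ y, exp (-ψ y + σ * y))) using 2 with x
    rw [bondWeight, log_mul (inv_pos.2 hpos).ne' (exp_pos _).ne', log_exp, log_inv]
    ring
  integrable := (hasExpMoments_bondWeight hexp).integrable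
  integrable_sq_mul := ((hasExpMoments_bondWeight hexp).pow_mul 2).integrable
  integral_eq_one := by
    rw [integral_bondWeight, div_self (integral_exp_pos (hexp.exp_neg_add_mul σ).integrable).ne']
  integral_id_mul := integral_id_mul_bondWeight hexp hσ
  integral_sq_mul := rfl

lemma exp_neg_sum_sub_eq (hψ : HasExpMoments fun x => exp (-ψ x)) (P : ℝ → ℝ) (d : ℕ → ℝ)
    (n : ℕ) :
    exp (-(∑ i ∈ Finset.range (n + 1), ψ (d i + A)) - P (d 0 + A)) =
      (∫ y, exp (-ψ y + σ * y)) ^ (n + 1) *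
        exp (-(σ * ∑ i ∈ Finset.range (n + 1), (d i + A))) *
        (bondWeight ψ (fun y => ψ y + P y) σ A (d 0) *
          ∏ i ∈ Finset.range n, bondWeight ψ ψ σ A (d (i + 1))) := by
  have hsplit : exp (-(∑ i ∈ Finset.range (n + 1), ψ (d i + A)) - P (d 0 + A)) =
      exp (-(ψ (d 0 + A) + P (d 0 + A))) * ∏ i ∈ Finset.range n, exp (-ψ (d (i + 1) + A)) := by
    rw [← exp_sum, ← exp_add, Finset.sum_neg_distrib, Finset.sum_range_succ']
    congr 1
    ring
  have hforce : exp (-(σ * ∑ i ∈ Finset.range (n + 1), (d i + A))) =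
      exp (-(σ * (d 0 + A))) * exp (-(σ * ∑ i ∈ Finset.range n, (d (i + 1) + A))) := by
    rw [← exp_add, Finset.sum_range_succ']
    congr 1
    ring
  rw [hsplit, hforce, exp_neg_add_eq_mul_bondWeight (V := fun y => ψ y + P y) (σ := σ) hψ]
  simp only [exp_neg_add_eq_mul_bondWeight (V := ψ) (σ := σ) hψ]
  rw [Finset.prod_mul_distrib, Finset.prod_mul_distrib, Finset.prod_const, Finset.card_range,
    ← exp_sum, Finset.sum_neg_distrib, ← Finset.mul_sum]
  ring

/-- The displacements `v` are measured from the homogeneous configuration `u i = i * A`. The force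
contributes a constant factor because the total length of the chain is fixed. -/
lemma exp_neg_chainE_sub_eq (hψ : HasExpMoments fun x => exp (-ψ x)) (P : ℝ → ℝ) (m : ℕ)
    (v : Fin (m + 1) → ℝ) :
    exp (-chainE (fun _ => ψ) (m + 2) ((m + 2 : ℕ) * A) (fun j => v j + ((j : ℝ) + 1) * A) -
        P (bc (m + 2) ((m + 2 : ℕ) * A) (fun j => v j + ((j : ℝ) + 1) * A) 1)) =
      (∫ y, exp (-ψ y + σ * y)) ^ (m + 2) * exp (-(σ * ((m + 2 : ℕ) * A))) *
        (bondWeight ψ (fun y => ψ y + P y) σ A (bc (m + 2) 0 v 1) *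
          ∏ i ∈ Finset.range (m + 1),
            bondWeight ψ ψ σ A (bc (m + 2) 0 v (i + 2) - bc (m + 2) 0 v (i + 1))) := by
  have hstep : ∀ i ∈ Finset.range (m + 2),
      bc (m + 2) ((m + 2 : ℕ) * A) (fun j => v j + ((j : ℝ) + 1) * A) (i + 1) -
        bc (m + 2) ((m + 2 : ℕ) * A) (fun j => v j + ((j : ℝ) + 1) * A) i =
      bc (m + 2) 0 v (i + 1) - bc (m + 2) 0 v i + A := fun i hi => by
    have hi := Finset.mem_range.1 hi
    rw [bc_add_mul (by omega) (by omega), bc_add_mul (by omega) (by omega)]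
    push_cast
    ring
  have henergy : chainE (fun _ => ψ) (m + 2) ((m + 2 : ℕ) * A)
      (fun j => v j + ((j : ℝ) + 1) * A) =
        ∑ i ∈ Finset.range (m + 2), ψ (bc (m + 2) 0 v (i + 1) - bc (m + 2) 0 v i + A) :=
    Finset.sum_congr rfl fun i hi => congrArg ψ (hstep i hi)
  have hfirst : bc (m + 2) ((m + 2 : ℕ) * A) (fun j => v j + ((j : ℝ) + 1) * A) 1 =
      bc (m + 2) 0 v 1 - bc (m + 2) 0 v 0 + A := by
    simpa only [zero_add, bc_zero, sub_zero] using hstep 0 (by simp)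
  have hlength : ∑ i ∈ Finset.range (m + 2), (bc (m + 2) 0 v (i + 1) - bc (m + 2) 0 v i + A) =
      (m + 2 : ℕ) * A := by
    rw [Finset.sum_add_distrib, Finset.sum_range_sub (bc (m + 2) 0 v),
      bc_of_pos_of_le (by omega) le_rfl, bc_zero]
    simp
  rw [henergy, hfirst, exp_neg_sum_sub_eq (σ := σ) hψ P
    (fun i => bc (m + 2) 0 v (i + 1) - bc (m + 2) 0 v i) (m + 1), hlength]
  simp only [zero_add, bc_zero, sub_zero]

lemma SmoothConvex.freeEnergy_eq (hψ : SmoothConvex c ψ) (hc : 0 < c)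
    (hexp : HasExpMoments fun x => exp (-ψ x))
    (hσ : ∫ y, y * exp (-ψ y + σ * y) = A * ∫ y, exp (-ψ y + σ * y)) {P : ℝ → ℝ}
    (hP : HasExpMoments fun x => exp (-(ψ x + P x))) (m : ℕ) :
    freeEnergy (fun _ => ψ) P (m + 2) A =
      -log ((∫ y, exp (-ψ y + σ * y)) ^ (m + 2) * exp (-(σ * ((m + 2 : ℕ) * A))) *
        (bondWeight ψ (fun y => ψ y + P y) σ A ⋆ convPow (bondWeight ψ ψ σ A) m) 0) := by
  have hφ := hψ.centredDensity_bondWeight hexp hσ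
  have hk : HasExpMoments (bondWeight ψ (fun y => ψ y + P y) σ A) := hasExpMoments_bondWeight hP
  have hconvPow := hφ.centredDensity_convPow hc
  rw [freeEnergy, ← integral_add_right_eq_self _ fun j : Fin (m + 2 - 1) => ((j : ℝ) + 1) * A,
    ← integral_mul_prod_bc_eq_convolution hk.integrable.aestronglyMeasurable
      (fun x => (bondWeight_pos hexp x).le) hφ.continuous.measurable (fun x => (hφ.pos x).le)
      (fun n x => (hconvPow n).convolutionExistsAt hφ.integrable x) m 0
      ((hconvPow m).convolutionExistsAt hk.integrable 0), ← integral_const_mul]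
  exact congrArg (fun z => -log z)
    (integral_congr_ae (ae_of_all _ fun v => exp_neg_chainE_sub_eq hexp P m v))

lemma SmoothConvex.freeEnergy_sub_freeEnergy_eq (hψ : SmoothConvex c ψ) (hc : 0 < c)
    (hexp : HasExpMoments fun x => exp (-ψ x))
    (hσ : ∫ y, y * exp (-ψ y + σ * y) = A * ∫ y, exp (-ψ y + σ * y)) {P : ℝ → ℝ}
    (hP : HasExpMoments fun x => exp (-(ψ x + P x))) (m : ℕ) :
    freeEnergy (fun _ => ψ) P (m + 2) A - freeEnergy (fun _ => ψ) (fun _ => 0) (m + 2) A =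
      -log ((bondWeight ψ (fun y => ψ y + P y) σ A ⋆ convPow (bondWeight ψ ψ σ A) m) 0 /
        (bondWeight ψ ψ σ A ⋆ convPow (bondWeight ψ ψ σ A) m) 0) := by
  have hφ := hψ.centredDensity_bondWeight hexp hσ
  have hfactor : 0 < (∫ y, exp (-ψ y + σ * y)) ^ (m + 2) * exp (-(σ * ((m + 2 : ℕ) * A))) :=
    mul_pos (pow_pos (integral_exp_pos (hexp.exp_neg_add_mul σ).integrable) _) (exp_pos _)
  have hkpos := (hφ.centredDensity_convPow hc m).convolution_pos
    (hasExpMoments_bondWeight (A := A) (σ := σ) (ψ := ψ) hP).integrable (bondWeight_pos hexp) 0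
  have hφpos := (hφ.centredDensity_convPow hc m).convolution_pos hφ.integrable hφ.pos 0
  have hbulk := hψ.freeEnergy_eq hc hexp hσ (P := fun _ => 0)
    (by simpa only [add_zero] using hexp) m
  simp only [add_zero] at hbulk
  rw [hψ.freeEnergy_eq hc hexp hσ hP, hbulk, log_mul hfactor.ne' hkpos.ne',
    log_mul hfactor.ne' hφpos.ne', log_div hkpos.ne' hφpos.ne']
  ring

lemma isBigO_one_div_of_isBigO_add_two {u : ℕ → ℝ}
    (hu : (fun n => u (n + 2)) =O[atTop] fun n : ℕ => ((n : ℝ) + 1)⁻¹) :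
    u =O[atTop] fun n : ℕ => 1 / (n : ℝ) := by
  have hrate : (fun n : ℕ => ((n : ℝ) + 1)⁻¹) =O[atTop] fun n : ℕ => 1 / ((n + 2 : ℕ) : ℝ) := by
    refine .of_bound 2 (.of_forall fun n => ?_)
    rw [norm_of_nonneg (by positivity), norm_of_nonneg (by positivity), inv_eq_one_div,
      mul_one_div, div_le_div_iff₀ (by positivity) (by positivity)]
    push_cast
    linarith [n.cast_nonneg (α := ℝ)]
  refine (hu.trans hrate).comp_tendsto (tendsto_sub_atTop_nat 2) |>.congr' ?_ ?_ <;>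
    filter_upwards [eventually_ge_atTop 2] with n hn <;>
    simp only [Function.comp_apply, Nat.sub_add_cancel hn]

lemma tendsto_and_exists_abs_sub_le_div_of_isBigO {u : ℕ → ℝ} {l : ℝ}
    (hu : (fun n => u n - l) =O[atTop] fun n : ℕ => 1 / (n : ℝ)) :
    Tendsto u atTop (nhds l) ∧ ∃ C > 0, ∀ n : ℕ, 0 < n → |u n - l| ≤ C / n := by
  obtain ⟨C, hC, hbound⟩ := Asymptotics.bound_of_isBigO_nat_atTop hu
  refine ⟨tendsto_sub_nhds_zero_iff.1 (hu.trans_tendsto tendsto_one_div_atTop_nhds_zero_nat),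
    C, hC, fun n hn => ?_⟩
  have hn : (0 : ℝ) < n := by exact_mod_cast hn
  simpa [abs_of_pos hn, div_eq_mul_inv] using hbound (one_div_pos.2 hn).ne'

lemma SmoothConvex.isBigO_freeEnergy_sub_freeEnergy_add_log (hψ : SmoothConvex c ψ) (hc : 0 < c)
    (hexp : HasExpMoments fun x => exp (-ψ x))
    (hσ : ∫ y, y * exp (-ψ y + σ * y) = A * ∫ y, exp (-ψ y + σ * y)) {P : ℝ → ℝ}
    (hP : HasExpMoments fun x => exp (-(ψ x + P x))) :
    (fun N : ℕ => freeEnergy (fun _ => ψ) P N A - freeEnergy (fun _ => ψ) (fun _ => 0) N A -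
        -log ((∫ y, exp (-(ψ y + P y) + σ * y)) / ∫ y, exp (-ψ y + σ * y)))
      =O[atTop] fun N : ℕ => 1 / (N : ℝ) := by
  have hφ := hψ.centredDensity_bondWeight hexp hσ
  have hratio := hφ.isBigO_convolution_convPow_div_sub hc (hasExpMoments_bondWeight hexp)
    (hasExpMoments_bondWeight (A := A) (σ := σ) (ψ := ψ) hP)
  rw [integral_bondWeight] at hratio
  have hlim : 0 < (∫ y, exp (-(ψ y + P y) + σ * y)) / ∫ y, exp (-ψ y + σ * y) :=
    div_pos (integral_exp_pos (hP.exp_neg_add_mul σ).integrable)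
      (integral_exp_pos (hexp.exp_neg_add_mul σ).integrable)
  have htendsto := tendsto_sub_nhds_zero_iff.1 <| hratio.trans_tendsto <|
    (tendsto_one_div_add_atTop_nhds_zero_nat (𝕜 := ℝ)).congr fun n => one_div _
  have hlog := ((hasDerivAt_log hlim.ne').isBigO_sub.comp_tendsto htendsto).trans hratio
  refine isBigO_one_div_of_isBigO_add_two (hlog.neg_left.congr_left fun m => ?_)
  rw [hψ.freeEnergy_sub_freeEnergy_eq hc hexp hσ hP]
  simp only [Function.comp_apply]
  ring

end FreeEnergy

theorem thermodynamic_limit_defect_formation_free_energy_general {ψ P : ℝ → ℝ} {κ : ℝ}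
    (hκ : 0 < κ) (hψ : SmoothConvex κ ψ) (hψexp : HasExpMoments fun y => exp (-ψ y))
    (hψPexp : HasExpMoments fun y => exp (-(ψ y + P y))) (A : ℝ) :
    Tendsto
      (fun N : ℕ => freeEnergy (fun _ => ψ) P N A - freeEnergy (fun _ => ψ) (fun _ => 0) N A)
      atTop
      (nhds (-log ((∫ y, exp (-(ψ y + P y) + deriv (W ψ) A * y)) /
        ∫ y, exp (-ψ y + deriv (W ψ) A * y)))) ∧
    ∃ C > 0, ∀ N : ℕ, 2 ≤ N →
      |(freeEnergy (fun _ => ψ) P N A - freeEnergy (fun _ => ψ) (fun _ => 0) N A) -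
        -log ((∫ y, exp (-(ψ y + P y) + deriv (W ψ) A * y)) /
          ∫ y, exp (-ψ y + deriv (W ψ) A * y))| ≤ C / N := by
  obtain ⟨σ, hσ⟩ := hψ.exists_mean_eq hκ hψexp A
  rw [(hψ.hasDerivAt_W hκ hψexp hσ).deriv]
  obtain ⟨htendsto, C, hC, hrate⟩ := tendsto_and_exists_abs_sub_le_div_of_isBigO
    (hψ.isBigO_freeEnergy_sub_freeEnergy_add_log hκ hψexp hσ hψPexp)
  exact ⟨htendsto, C, hC, fun N hN => hrate N (by omega)⟩

/-- thermodynamic limit of the defect-formation free energy with rate `1/N`. -/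
theorem thermodynamic_limit_defect_formation_free_energy
    (ψ P : ℝ → ℝ) (κ₁ κ₂ ς₁ ς₂ : ℝ)
    (hψ : ContDiff ℝ 2 ψ) (hP : ContDiff ℝ 2 P)
    (hκ₁ : 0 < κ₁) (hκ : κ₁ ≤ κ₂) (hς₁ : 0 < ς₁) (hς : ς₁ ≤ ς₂)
    (hψ'' : ∀ y : ℝ, κ₁ ≤ deriv (deriv ψ) y ∧ deriv (deriv ψ) y ≤ κ₂)
    (hψP'' : ∀ y : ℝ, ς₁ ≤ deriv (deriv (fun z => ψ z + P z)) y ∧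
        deriv (deriv (fun z => ψ z + P z)) y ≤ ς₂)
    (A : ℝ) :
    Tendsto
      (fun N : ℕ => freeEnergy (fun _ => ψ) P N A - freeEnergy (fun _ => ψ) (fun _ => 0) N A)
      atTop
      (nhds (- Real.log
        ((∫ y : ℝ, Real.exp (-(ψ y + P y) + deriv (W ψ) A * y)) /
         (∫ y : ℝ, Real.exp (-ψ y + deriv (W ψ) A * y))))) ∧
    ∃ C > 0, ∀ N : ℕ, 2 ≤ N →
      |(freeEnergy (fun _ => ψ) P N A - freeEnergy (fun _ => ψ) (fun _ => 0) N A) -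
        (- Real.log
          ((∫ y : ℝ, Real.exp (-(ψ y + P y) + deriv (W ψ) A * y)) /
           (∫ y : ℝ, Real.exp (-ψ y + deriv (W ψ) A * y))))| ≤ C / N := by
  have hψexp := hasExpMoments_exp_neg hκ₁ (strongConvexOn_univ_of_deriv2 hψ fun y => (hψ'' y).1)
  have hψPexp := hasExpMoments_exp_neg hς₁
    (strongConvexOn_univ_of_deriv2 (hψ.add hP) fun y => (hψP'' y).1)
  exact thermodynamic_limit_defect_formation_free_energy_general (hκ₁.trans_le hκ)
    (.of_deriv2 hψ (fun y => hκ₁.le.trans (hψ'' y).1) fun y => (hψ'' y).2) hψexp hψPexp A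
end
end

section
/- With F̃_N(A), W̃_N(A), σ*, the measures μ̃_i and the density g̃_{N,A} as defined in the context, the identity F̃_N(A) = (1/2)·log N + N·W̃_N(A) − log g̃_{N,A}(0) holds. -/
/-!
In the increments `x i = u i - u (i - 1)`, a unitriangular change of coordinates, the linear terms
of the product Gibbs density telescope: with end point `s = ∑ x i` it equals `exp (σ s)` times the
Boltzmann weight of the chain, divided by the one-bond partition functions. Integrating out the
interior positions therefore expresses the density of `∑ x i` at `s` through the partition function
of chains ending at `s`.

First-order optimality of `σ*` says that the means of the Gibbs measures add up to `N A`, so the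
centred sum vanishes exactly at `s = N A`, and rescaling it by `1 / √N` multiplies the density by
`√N`. Since a measure determines its density only almost everywhere, the value at `0` is recovered
from continuity. For the density of the sum this is dominated convergence: the last bond energy is
bounded below and the other bonds do not see the end point, which yields a majorant uniform in `s`.

Uniform convexity provides the quadratic growth that makes all exponential moments of the Boltzmann
weights finite.
-/

noncomputable section

open MeasureTheory Real Filter

/-- The free energy `F̃_N(A) = -log ∫_{ℝ^{N-1}} exp(-∑_{i=1}^N ψ̃_i(u_i - u_{i-1})) du`,
with `u 0 = 0`, `u N = N A`. -/
def freeEnergyTilde (φ : ℕ → ℝ → ℝ) (N : ℕ) (A : ℝ) : ℝ :=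
  - Real.log (∫ u : Fin (N - 1) → ℝ, Real.exp (-(chainE φ N (N * A) u)))

/-- `W̃_N(A) = sup_σ { σ A - (1/N) ∑_{i=1}^N log ∫ exp(-ψ̃_i(y) + σ y) dy }`. -/
def WNtilde (φ : ℕ → ℝ → ℝ) (N : ℕ) (A : ℝ) : ℝ :=
  ⨆ σ : ℝ, (σ * A -
    (N : ℝ)⁻¹ * ∑ i ∈ Finset.Icc 1 N, Real.log (∫ y : ℝ, Real.exp (-φ i y + σ * y)))

/-- The one-dimensional Gibbs measure `μ̃_i^σ(dy) = Z⁻¹ exp(σ y - ψ̃_i y) dy`. -/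
def gibbs (f : ℝ → ℝ) (σ : ℝ) : Measure ℝ :=
  volume.withDensity fun y =>
    ENNReal.ofReal ((∫ z : ℝ, Real.exp (σ * z - f z))⁻¹ * Real.exp (σ * y - f y))

/-- The mean of the Gibbs measure `μ̃_i^σ`. -/
def gibbsMean (f : ℝ → ℝ) (σ : ℝ) : ℝ :=
  (∫ z : ℝ, z * Real.exp (σ * z - f z)) / (∫ z : ℝ, Real.exp (σ * z - f z))

/-! ### Measures with a density -/

section Density

variable {α β : Type*} [MeasurableSpace α] [MeasurableSpace β]

lemma map_withDensity_comp {μ : Measure α} {T : α → β} (hT : Measurable T) {p : β → ENNReal}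
    (hp : Measurable p) :
    (μ.withDensity (p ∘ T)).map T = (μ.map T).withDensity p := by
  ext B hB
  rw [Measure.map_apply hT hB, withDensity_apply _ (hT hB), withDensity_apply _ hB,
    setLIntegral_map hB hp hT]
  rfl

lemma map_fst_withDensity_prod (μ : Measure α) (ν : Measure β) [SFinite μ] [SFinite ν]
    {p : α × β → ENNReal} (hp : Measurable p) :
    ((μ.prod ν).withDensity p).map Prod.fst = μ.withDensity fun x => ∫⁻ y, p (x, y) ∂ν := by
  ext B hB
  rw [Measure.map_apply measurable_fst hB, withDensity_apply _ (measurable_fst hB),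
    withDensity_apply _ hB, ← Set.prod_univ, setLIntegral_prod _ hp.aemeasurable]
  simp only [Measure.restrict_univ]

lemma map_withDensity_inv_mul_sub {r : ℝ} (hr : 0 < r) (a : ℝ) {p : ℝ → ENNReal}
    (hp : Measurable p) :
    (volume.withDensity p).map (fun s => r⁻¹ * (s - a))
      = volume.withDensity fun t => ENNReal.ofReal r * p (r * t + a) := by
  have hT : Measurable fun s : ℝ => r⁻¹ * (s - a) := by fun_prop
  have hpa : Measurable fun t => p (r * t + a) := hp.comp (by fun_prop)
  have hcomp : p = (fun t => p (r * t + a)) ∘ fun s => r⁻¹ * (s - a) := by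
    funext s
    simp only [Function.comp_apply, mul_inv_cancel_left₀ hr.ne', sub_add_cancel]
  have hvol : (volume : Measure ℝ).map (fun s => r⁻¹ * (s - a)) = ENNReal.ofReal r • volume := by
    rw [← Function.comp_def (fun s => r⁻¹ * s) (fun s => s - a),
      ← Measure.map_map (by fun_prop) (by fun_prop), map_sub_right_eq_self,
      Real.map_volume_mul_left (inv_ne_zero hr.ne'), inv_inv, abs_of_pos hr]
  conv_lhs => rw [hcomp]
  rw [map_withDensity_comp hT hpa, hvol, withDensity_smul_measure, ← withDensity_smul _ hpa]
  rfl

lemma pi_withDensity_ofReal {ι : Type*} [Fintype ι] {X : ι → Type*} [∀ i, MeasurableSpace (X i)]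
    (μ : ∀ i, Measure (X i)) [∀ i, SigmaFinite (μ i)] {p : ∀ i, X i → ℝ}
    (hp : ∀ i, Integrable (p i) (μ i)) (hp0 : ∀ i x, 0 ≤ p i x) :
    (Measure.pi fun i => (μ i).withDensity fun x => ENNReal.ofReal (p i x))
      = (Measure.pi μ).withDensity fun x => ENNReal.ofReal (∏ i, p i (x i)) := by
  refine Measure.pi_eq fun s hs => ?_
  rw [withDensity_apply _ (MeasurableSet.univ_pi hs), Measure.restrict_pi_pi,
    ← ofReal_integral_eq_lintegral_ofReal
      (Integrable.fintype_prod_dep fun i => (hp i).restrict)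
      (Eventually.of_forall fun x => Finset.prod_nonneg fun i _ => hp0 i _),
    integral_fintype_prod_eq_prod,
    ENNReal.ofReal_prod_of_nonneg fun i _ => integral_nonneg (hp0 i)]
  refine Finset.prod_congr rfl fun i _ => ?_
  rw [withDensity_apply _ (hs i),
    ofReal_integral_eq_lintegral_ofReal (hp i).restrict (Eventually.of_forall (hp0 i))]

/- `ENNReal.ofReal` forgets the sign of negative values, so only positive values of a continuous
density are determined by the measure. -/
lemma eq_of_withDensity_ofReal_eq [TopologicalSpace α] [OpensMeasurableSpace α] {μ : Measure α}
    [SigmaFinite μ] [μ.IsOpenPosMeasure] {p q : α → ℝ} (hp : Continuous p) (hq : Continuous q)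
    (h : (μ.withDensity fun x => ENNReal.ofReal (p x))
      = μ.withDensity fun x => ENNReal.ofReal (q x)) {x : α} (hx : 0 < q x) :
    p x = q x := by
  have hp' : Continuous fun x => ENNReal.ofReal (p x) := ENNReal.continuous_ofReal.comp hp
  have hq' : Continuous fun x => ENNReal.ofReal (q x) := ENNReal.continuous_ofReal.comp hq
  have hae := (withDensity_eq_iff_of_sigmaFinite hp'.measurable.aemeasurable
    hq'.measurable.aemeasurable).1 h
  have hpq : ENNReal.ofReal (p x) = ENNReal.ofReal (q x) :=
    congrFun (Measure.eq_of_ae_eq hae hp' hq') x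
  have hpx : 0 < p x := ENNReal.ofReal_pos.1 (hpq ▸ ENNReal.ofReal_pos.2 hx)
  exact (ENNReal.ofReal_eq_ofReal_iff hpx.le hx.le).1 hpq

end Density

/-! ### Increments of a finite sequence -/

section Increments

variable (R : Type*) [CommRing R] {m : ℕ}

/-- The increments `u i - u (i - 1)` of a finite sequence `u` started from the extra value `0`,
so that `u 0` is its own increment. -/
def increments (m : ℕ) : (Fin m → R) →ₗ[R] (Fin m → R) where
  toFun u i := u i - (Fin.cons 0 u : Fin (m + 1) → R) i.castSucc
  map_add' u v := by
    funext i
    rcases Fin.eq_zero_or_eq_succ i.castSucc with h | ⟨j, h⟩ <;> simp [h, add_sub_add_comm]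
  map_smul' c u := by
    funext i
    rcases Fin.eq_zero_or_eq_succ i.castSucc with h | ⟨j, h⟩ <;> simp [h, mul_sub]

lemma increments_apply (u : Fin m → R) (i : Fin m) :
    increments R m u i = u i - (Fin.cons 0 u : Fin (m + 1) → R) i.castSucc :=
  rfl

lemma increments_single_of_le {i j : Fin m} (h : i ≤ j) (c : R) :
    increments R m (Pi.single j c) i = Pi.single (M := fun _ => R) j c i := by
  rw [increments_apply, sub_eq_self]
  rcases Fin.eq_zero_or_eq_succ i.castSucc with hi | ⟨k, hk⟩
  · rw [hi, Fin.cons_zero]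
  · have hkj : k ≠ j := by grind
    rw [hk, Fin.cons_succ, Pi.single_eq_of_ne hkj]

lemma det_increments : LinearMap.det (increments R m) = 1 := by
  rw [← LinearMap.det_toMatrix', Matrix.det_of_isLowerTriangular]
  · refine Finset.prod_eq_one fun i _ => ?_
    rw [LinearMap.toMatrix'_apply, increments_single_of_le R le_rfl, Pi.single_eq_same]
  · intro i j (hij : i < j)
    rw [LinearMap.toMatrix'_apply, increments_single_of_le R hij.le, Pi.single_eq_of_ne hij.ne]

lemma sum_increments (u : Fin m → R) :
    ∑ i, increments R m u i = (Fin.cons 0 u : Fin (m + 1) → R) (Fin.last m) := by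
  have h := (Fin.sum_univ_succ (Fin.cons 0 u : Fin (m + 1) → R)).symm.trans
    (Fin.sum_univ_castSucc _)
  simp only [Fin.cons_zero, Fin.cons_succ, zero_add] at h
  simp only [increments_apply, Finset.sum_sub_distrib, h, add_sub_cancel_left]

lemma increments_snoc (v : Fin m → R) (b : R) :
    increments R (m + 1) (Fin.snoc (α := fun _ => R) v b)
      = Fin.snoc (α := fun _ => R) (increments R m v)
          (b - (Fin.cons 0 v : Fin (m + 1) → R) (Fin.last m)) := by
  funext i
  rw [increments_apply, Fin.cons_snoc_eq_snoc_cons, Fin.snoc_castSucc]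
  refine Fin.lastCases ?_ (fun j => ?_) i
  · simp only [Fin.snoc_last]
  · simp only [Fin.snoc_castSucc, increments_apply]

lemma sum_increments_snoc (v : Fin m → R) (b : R) :
    ∑ i, increments R (m + 1) (Fin.snoc (α := fun _ => R) v b) i = b := by
  rw [sum_increments, Fin.cons_snoc_eq_snoc_cons, Fin.snoc_last]

end Increments

lemma measurePreserving_increments (m : ℕ) : MeasurePreserving (increments ℝ m) := by
  refine ⟨(LinearMap.continuous_of_finiteDimensional _).measurable, ?_⟩
  rw [Real.map_linearMap_volume_pi_eq_smul_volume_pi (by simp [det_increments])]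
  simp [det_increments]

lemma measurePreserving_increments_snoc (n : ℕ) :
    MeasurePreserving fun q : ℝ × (Fin n → ℝ) =>
      increments ℝ (n + 1) (Fin.snoc (α := fun _ => ℝ) q.2 q.1) := by
  have hsnoc := (volume_preserving_piFinSuccAbove (fun _ : Fin (n + 1) => ℝ) (Fin.last n)).symm
  have h := (measurePreserving_increments (n + 1)).comp hsnoc
  simp only [Function.comp_def, MeasurableEquiv.piFinSuccAbove_symm_apply,
    Fin.insertNthEquiv_last] at h
  exact h

/- In the coordinates `x = increments (snoc v s)` the sum is the coordinate `s`. -/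
lemma map_sum_withDensity (n : ℕ) {p : (Fin (n + 1) → ℝ) → ENNReal} (hp : Measurable p) :
    (volume.withDensity p).map (fun x => ∑ i, x i) = volume.withDensity fun s =>
      ∫⁻ v : Fin n → ℝ, p (increments ℝ (n + 1) (Fin.snoc (α := fun _ => ℝ) v s)) := by
  have hT := measurePreserving_increments_snoc n
  rw [← hT.map_eq, ← map_withDensity_comp hT.measurable hp,
    Measure.map_map (by fun_prop) hT.measurable, Measure.volume_eq_prod]
  simp only [Function.comp_def, sum_increments_snoc]
  exact map_fst_withDensity_prod _ _ (hp.comp hT.measurable)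

/-! ### Confining potentials -/

/-- A potential on the line that is bounded below and grows so fast that all exponential moments
of its Boltzmann weight `exp (-f)` are finite. -/
structure IsConfining (f : ℝ → ℝ) : Prop where
  continuous : Continuous f
  bddBelow : BddBelow (Set.range f)
  integrable_exp : ∀ σ : ℝ, Integrable fun y => exp (σ * y - f y)

lemma IsConfining.integrable_exp_neg {f : ℝ → ℝ} (hf : IsConfining f) :
    Integrable fun y => exp (-f y) := by
  simpa using hf.integrable_exp 0

lemma strongConvexOn_univ_of_le_deriv2 {f : ℝ → ℝ} {κ : ℝ} (hf : ContDiff ℝ 2 f)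
    (hf2 : ∀ y, κ ≤ deriv (deriv f) y) : StrongConvexOn Set.univ κ f := by
  have hd : Differentiable ℝ f := hf.differentiable two_ne_zero
  have hd' : Differentiable ℝ (deriv f) :=
    (contDiff_succ_iff_deriv (n := 1).1 hf).2.2.differentiable one_ne_zero
  have hderiv (y : ℝ) : HasDerivAt (fun y => f y - κ / 2 * ‖y‖ ^ 2) (deriv f y - κ * y) y := by
    simp only [norm_eq_abs, sq_abs]
    exact ((hd y).hasDerivAt.sub (((hasDerivAt_id y).pow 2).const_mul (κ / 2))).congr_deriv
      (by simp; ring)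
  have hderiv2 (y : ℝ) : HasDerivAt (fun y => deriv f y - κ * y) (deriv (deriv f) y - κ) y :=
    ((hd' y).hasDerivAt.sub ((hasDerivAt_id y).const_mul κ)).congr_deriv (by simp)
  have hderiv_eq : deriv (fun y => f y - κ / 2 * ‖y‖ ^ 2) = fun y => deriv f y - κ * y :=
    funext fun y => (hderiv y).deriv
  refine strongConvexOn_iff_convex.2 (convexOn_univ_of_deriv2_nonneg
    (fun y => (hderiv y).differentiableAt) ?_ fun y => ?_)
  · exact hderiv_eq ▸ fun y => (hderiv2 y).differentiableAt
  · rw [Function.iterate_succ_apply, Function.iterate_one, hderiv_eq, (hderiv2 y).deriv]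
    exact sub_nonneg.2 (hf2 y)

section StrongConvexOn

variable {f : ℝ → ℝ} {κ : ℝ}

lemma continuous_of_strongConvexOn_univ (hf : StrongConvexOn Set.univ κ f) : Continuous f := by
  have h := (strongConvexOn_iff_convex.1 hf).locallyLipschitz.continuous
  exact (h.add (g := fun y => κ / 2 * ‖y‖ ^ 2) (by fun_prop)).congr fun y => sub_add_cancel _ _

lemma exists_quadratic_le_of_strongConvexOn_univ (hκ : 0 < κ) (hf : StrongConvexOn Set.univ κ f)
    (σ : ℝ) : ∃ C, ∀ y, κ / 4 * y ^ 2 - C ≤ f y - σ * y := by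
  have hconv := strongConvexOn_iff_convex.1 hf
  obtain ⟨c, c', hc⟩ := hconv.exists_affine_le_real isClosed_univ
    (hconv.locallyLipschitz.continuous.lowerSemicontinuous.lowerSemicontinuousOn _)
  refine ⟨(c - σ) ^ 2 / κ - c', fun y => ?_⟩
  have haffine : c * y + c' ≤ f y - κ / 2 * y ^ 2 := by
    simpa only [norm_eq_abs, sq_abs] using hc y (Set.mem_univ y)
  have hsquare : κ / 4 * y ^ 2 + (c - σ) * y + (c - σ) ^ 2 / κ = (κ / 2 * y + (c - σ)) ^ 2 / κ := by
    field_simp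
    ring
  have hnonneg : 0 ≤ (κ / 2 * y + (c - σ)) ^ 2 / κ := by positivity
  linarith

lemma isConfining_of_strongConvexOn (hκ : 0 < κ) (hf : StrongConvexOn Set.univ κ f) :
    IsConfining f := by
  have hcont := continuous_of_strongConvexOn_univ hf
  refine ⟨hcont, ?_, fun σ => ?_⟩
  · obtain ⟨C, hC⟩ := exists_quadratic_le_of_strongConvexOn_univ hκ hf 0
    refine ⟨-C, ?_⟩
    rintro _ ⟨y, rfl⟩
    have hsq : 0 ≤ κ / 4 * y ^ 2 := by positivity
    linarith [hC y]
  · obtain ⟨C, hC⟩ := exists_quadratic_le_of_strongConvexOn_univ hκ hf σ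
    refine ((integrable_exp_neg_mul_sq (b := κ / 4) (by positivity)).const_mul (exp C)).mono'
      (by fun_prop : Continuous _).aestronglyMeasurable (Eventually.of_forall fun y => ?_)
    rw [norm_of_nonneg (exp_pos _).le, ← exp_add]
    exact exp_le_exp.2 (by linarith [hC y])

end StrongConvexOn

/-! ### Partition functions -/

/-- The partition function `∫ exp (σ y - f y) dy` of the potential `f` tilted by `σ`. -/
def partitionFn (f : ℝ → ℝ) (σ : ℝ) : ℝ :=
  ∫ y : ℝ, exp (σ * y - f y)

/-- The untilted and unnormalized Boltzmann measure `exp (-f y) dy`, whose moment generating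
function is the partition function. -/
def boltzmann (f : ℝ → ℝ) : Measure ℝ :=
  volume.withDensity fun y => ENNReal.ofReal (exp (-f y))

namespace IsConfining

variable {f : ℝ → ℝ} (hf : IsConfining f)
include hf

lemma partitionFn_pos (σ : ℝ) : 0 < partitionFn f σ :=
  integral_exp_pos (hf.integrable_exp σ)

lemma integral_boltzmann (k : ℝ → ℝ) : ∫ y, k y ∂boltzmann f = ∫ y, k y * exp (-f y) := by
  have hcont := hf.continuous
  rw [boltzmann, integral_withDensity_eq_integral_toReal_smul (by fun_prop) (by simp)]
  simp only [ENNReal.toReal_ofReal (exp_pos _).le, smul_eq_mul, mul_comm]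

lemma mgf_boltzmann : ProbabilityTheory.mgf id (boltzmann f) = partitionFn f := by
  funext σ
  simp only [ProbabilityTheory.mgf, hf.integral_boltzmann, ← exp_add, ← sub_eq_add_neg, id]
  rfl

lemma integrableExpSet_boltzmann :
    ProbabilityTheory.integrableExpSet id (boltzmann f) = Set.univ := by
  have hcont := hf.continuous
  refine Set.eq_univ_of_forall fun σ => ?_
  change Integrable (fun y => exp (σ * y)) (boltzmann f)
  rw [boltzmann, integrable_withDensity_iff (by fun_prop) (by simp)]
  simpa only [ENNReal.toReal_ofReal (exp_pos _).le, ← exp_add, ← sub_eq_add_neg]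
    using hf.integrable_exp σ

lemma hasDerivAt_log_partitionFn (σ : ℝ) :
    HasDerivAt (fun σ => log (partitionFn f σ)) (gibbsMean f σ) σ := by
  have h := ProbabilityTheory.hasDerivAt_mgf (X := id) (μ := boltzmann f) (t := σ)
    (by simp [hf.integrableExpSet_boltzmann])
  simp only [hf.mgf_boltzmann, hf.integral_boltzmann, id, mul_assoc, ← exp_add,
    ← sub_eq_add_neg] at h
  exact h.log (hf.partitionFn_pos σ).ne'

end IsConfining

/-! ### The saddle point -/

/-- The function of the tilt `σ` whose supremum is `WNtilde`. -/
def legendreObjective (φ : ℕ → ℝ → ℝ) (N : ℕ) (A σ : ℝ) : ℝ :=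
  σ * A - (N : ℝ)⁻¹ * ∑ i ∈ Finset.Icc 1 N, log (∫ y : ℝ, exp (-φ i y + σ * y))

lemma WNtilde_eq_of_forall_le {φ : ℕ → ℝ → ℝ} {N : ℕ} {A σ₀ : ℝ}
    (hmax : ∀ σ, legendreObjective φ N A σ ≤ legendreObjective φ N A σ₀) :
    WNtilde φ N A = legendreObjective φ N A σ₀ :=
  le_antisymm (ciSup_le hmax) (le_ciSup ⟨_, Set.forall_mem_range.2 hmax⟩ σ₀)

lemma legendreObjective_eq (φ : ℕ → ℝ → ℝ) (N : ℕ) (A σ : ℝ) :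
    legendreObjective φ N A σ
      = σ * A - (N : ℝ)⁻¹ * ∑ i : Fin N, log (partitionFn (φ (i + 1)) σ) := by
  rw [Fin.sum_univ_eq_sum_range fun i => log (partitionFn (φ (i + 1)) σ), Finset.range_eq_Ico,
    Finset.sum_Ico_add' (fun i => log (partitionFn (φ i) σ))]
  simp only [legendreObjective, partitionFn, neg_add_eq_sub, zero_add,
    Finset.Ico_add_one_right_eq_Icc]

lemma sum_gibbsMean_eq {φ : ℕ → ℝ → ℝ} (hφ : ∀ i, IsConfining (φ i)) {N : ℕ} (hN : N ≠ 0)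
    {A σ₀ : ℝ} (hmax : ∀ σ, legendreObjective φ N A σ ≤ legendreObjective φ N A σ₀) :
    ∑ i : Fin N, gibbsMean (φ (i + 1)) σ₀ = N * A := by
  have hderiv := ((hasDerivAt_id σ₀).mul_const A).sub ((HasDerivAt.fun_sum
    fun (i : Fin N) (_ : i ∈ Finset.univ) =>
      (hφ (i + 1)).hasDerivAt_log_partitionFn σ₀).const_mul (N : ℝ)⁻¹)
  simp only [legendreObjective_eq] at hmax
  have hcrit := IsLocalMax.hasDerivAt_eq_zero (Eventually.of_forall hmax) hderiv
  have hN' : (N : ℝ) ≠ 0 := Nat.cast_ne_zero.2 hN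
  field_simp at hcrit
  linarith

/-! ### The chain partition function -/

lemma bc_eq_cons_snoc (n : ℕ) (b : ℝ) (v : Fin n → ℝ) (i : Fin (n + 2)) :
    bc (n + 1) b v i
      = (Fin.cons 0 (Fin.snoc (α := fun _ => ℝ) v b) : Fin (n + 2) → ℝ) i := by
  refine Fin.cases ?_ (fun j => ?_) i
  · simp [bc]
  · refine Fin.lastCases ?_ (fun k => ?_) j <;> simp [bc]

lemma chainE_eq (φ : ℕ → ℝ → ℝ) (n : ℕ) (b : ℝ) (v : Fin n → ℝ) :
    chainE φ (n + 1) b v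
      = ∑ i : Fin (n + 1), φ (i + 1)
          (increments ℝ (n + 1) (Fin.snoc (α := fun _ => ℝ) v b) i) := by
  rw [chainE, ← Fin.sum_univ_eq_sum_range
    fun i => φ (i + 1) (bc (n + 1) b v (i + 1) - bc (n + 1) b v i)]
  refine Finset.sum_congr rfl fun i _ => ?_
  have hsucc : bc (n + 1) b v (i + 1) = Fin.snoc (α := fun _ => ℝ) v b i := by
    simpa only [Fin.val_succ, Fin.cons_succ] using bc_eq_cons_snoc n b v i.succ
  rw [hsucc, increments_apply, ← bc_eq_cons_snoc, Fin.val_castSucc]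

lemma chainE_eq_add (φ : ℕ → ℝ → ℝ) (n : ℕ) (b : ℝ) (v : Fin n → ℝ) :
    chainE φ (n + 1) b v
      = ∑ i : Fin n, φ (i + 1) (increments ℝ n v i)
        + φ (n + 1) (b - (Fin.cons 0 v : Fin (n + 1) → ℝ) (Fin.last n)) := by
  simp only [chainE_eq, Fin.sum_univ_castSucc, increments_snoc, Fin.snoc_castSucc, Fin.snoc_last,
    Fin.val_castSucc, Fin.val_last]

/-- The partition function of the chain of `N` bonds with end points `0` and `b`. -/
def chainPartitionFn (φ : ℕ → ℝ → ℝ) (N : ℕ) (b : ℝ) : ℝ :=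
  ∫ u : Fin (N - 1) → ℝ, exp (-chainE φ N b u)

section Chain

variable {φ : ℕ → ℝ → ℝ}

lemma continuous_chainE (hφ : ∀ i, Continuous (φ i)) (n : ℕ) :
    Continuous fun q : ℝ × (Fin n → ℝ) => chainE φ (n + 1) q.1 q.2 := by
  have hinc : Continuous (increments ℝ (n + 1)) := LinearMap.continuous_of_finiteDimensional _
  have hsnoc : Continuous fun q : ℝ × (Fin n → ℝ) => Fin.snoc (α := fun _ => ℝ) q.2 q.1 :=
    Continuous.finSnoc (A := fun _ => ℝ) continuous_snd continuous_fst
  simp only [chainE_eq]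
  exact continuous_finsetSum _ fun i _ =>
    (hφ _).comp ((continuous_apply i).comp (hinc.comp hsnoc))

variable (hφ : ∀ i, IsConfining (φ i)) (n : ℕ)
include hφ

/- The last bond, the only one that feels the end point `b`, is bounded below; the others factorize
in the increment variables. -/
lemma exists_integrable_exp_neg_chainE_le :
    ∃ G : (Fin n → ℝ) → ℝ, Integrable G ∧ ∀ b v, exp (-chainE φ (n + 1) b v) ≤ G v := by
  obtain ⟨c, hc⟩ := (hφ (n + 1)).bddBelow
  have hprod : Integrable fun x : Fin n → ℝ => ∏ i : Fin n, exp (-φ (i + 1) (x i)) :=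
    Integrable.fintype_prod_dep (f := fun (i : Fin n) y => exp (-φ (i + 1) y))
      fun i => (hφ (i + 1)).integrable_exp_neg
  refine ⟨fun v => exp (-c) * ∏ i : Fin n, exp (-φ (i + 1) (increments ℝ n v i)),
    ((measurePreserving_increments n).integrable_comp_of_integrable hprod).const_mul _,
    fun b v => ?_⟩
  have hlast := hc (Set.mem_range_self (b - (Fin.cons 0 v : Fin (n + 1) → ℝ) (Fin.last n)))
  beta_reduce
  rw [← exp_sum, ← exp_add, chainE_eq_add, Finset.sum_neg_distrib]
  exact exp_le_exp.2 (by linarith)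

lemma continuous_exp_neg_chainE :
    Continuous fun q : ℝ × (Fin n → ℝ) => exp (-chainE φ (n + 1) q.1 q.2) :=
  continuous_exp.comp (continuous_chainE (fun i => (hφ i).continuous) n).neg

lemma integrable_exp_neg_chainE (b : ℝ) :
    Integrable fun v : Fin n → ℝ => exp (-chainE φ (n + 1) b v) := by
  obtain ⟨G, hG, hle⟩ := exists_integrable_exp_neg_chainE_le hφ n
  refine hG.mono' ((continuous_exp_neg_chainE hφ n).comp
    (Continuous.prodMk_right b)).aestronglyMeasurable (Eventually.of_forall fun v => ?_)
  rw [norm_of_nonneg (exp_pos _).le]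
  exact hle b v

lemma chainPartitionFn_pos (b : ℝ) : 0 < chainPartitionFn φ (n + 1) b :=
  integral_exp_pos (integrable_exp_neg_chainE hφ n b)

lemma continuous_chainPartitionFn : Continuous (chainPartitionFn φ (n + 1)) := by
  obtain ⟨G, hG, hle⟩ := exists_integrable_exp_neg_chainE_le hφ n
  refine continuous_of_dominated (bound := G)
    (fun b => (integrable_exp_neg_chainE hφ n b).aestronglyMeasurable)
    (fun b => Eventually.of_forall fun v => ?_) hG (Eventually.of_forall fun v =>
      (continuous_exp_neg_chainE hφ n).comp (Continuous.prodMk_left v))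
  rw [norm_of_nonneg (exp_pos _).le]
  exact hle b v

end Chain

/-! ### The law of the sum -/

/-- The density of the sum of `N` independent variables with the Gibbs laws `gibbs (φ i) σ`,
`1 ≤ i ≤ N`. -/
def gibbsSumDensity (φ : ℕ → ℝ → ℝ) (N : ℕ) (σ s : ℝ) : ℝ :=
  (∏ i : Fin N, partitionFn (φ (i + 1)) σ)⁻¹ * exp (σ * s) * chainPartitionFn φ N s

section GibbsSum

variable {φ : ℕ → ℝ → ℝ} (hφ : ∀ i, IsConfining (φ i)) (n : ℕ) (σ : ℝ)

/- The linear terms `σ * x i` telescope. -/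
lemma prod_gibbsDensity_increments_snoc (v : Fin n → ℝ) (s : ℝ) :
    ∏ i : Fin (n + 1), ((partitionFn (φ (i + 1)) σ)⁻¹
        * exp (σ * increments ℝ (n + 1) (Fin.snoc (α := fun _ => ℝ) v s) i
          - φ (i + 1) (increments ℝ (n + 1) (Fin.snoc (α := fun _ => ℝ) v s) i)))
      = (∏ i : Fin (n + 1), partitionFn (φ (i + 1)) σ)⁻¹ * exp (σ * s)
        * exp (-chainE φ (n + 1) s v) := by
  rw [Finset.prod_mul_distrib, Finset.prod_inv_distrib, ← exp_sum, Finset.sum_sub_distrib,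
    ← Finset.mul_sum, sum_increments_snoc, ← chainE_eq, sub_eq_add_neg, exp_add, mul_assoc]

include hφ

lemma prod_partitionFn_pos (N : ℕ) : 0 < ∏ i : Fin N, partitionFn (φ (i + 1)) σ :=
  Finset.prod_pos fun i _ => (hφ (i + 1)).partitionFn_pos σ

lemma pi_gibbs_eq_withDensity (N : ℕ) :
    (Measure.pi fun i : Fin N => gibbs (φ (i + 1)) σ) = volume.withDensity fun x =>
      ENNReal.ofReal (∏ i : Fin N,
        ((partitionFn (φ (i + 1)) σ)⁻¹ * exp (σ * x i - φ (i + 1) (x i)))) :=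
  pi_withDensity_ofReal (fun _ => volume)
    (p := fun (i : Fin N) y => (partitionFn (φ (i + 1)) σ)⁻¹ * exp (σ * y - φ (i + 1) y))
    (fun i => ((hφ (i + 1)).integrable_exp σ).const_mul _)
    fun i _ => mul_nonneg (inv_nonneg.2 ((hφ (i + 1)).partitionFn_pos σ).le) (exp_pos _).le

lemma continuous_gibbsSumDensity : Continuous (gibbsSumDensity φ (n + 1) σ) :=
  (Continuous.mul (by fun_prop) (by fun_prop)).mul (continuous_chainPartitionFn hφ n)

lemma map_sum_pi_gibbs :
    (Measure.pi fun i : Fin (n + 1) => gibbs (φ (i + 1)) σ).map (fun x => ∑ i, x i)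
      = volume.withDensity fun s => ENNReal.ofReal (gibbsSumDensity φ (n + 1) σ s) := by
  have hcont : ∀ i, Continuous (φ i) := fun i => (hφ i).continuous
  rw [pi_gibbs_eq_withDensity hφ,
    map_sum_withDensity n (Continuous.measurable (by fun_prop)).ennreal_ofReal]
  congr 1 with s
  have hZ := prod_partitionFn_pos hφ σ (n + 1)
  simp only [prod_gibbsDensity_increments_snoc]
  rw [← ofReal_integral_eq_lintegral_ofReal ((integrable_exp_neg_chainE hφ n s).const_mul _)
    (Eventually.of_forall fun v => by positivity), integral_const_mul]
  rfl

lemma map_inv_mul_sum_sub_pi_gibbs {r : ℝ} (hr : 0 < r) (m : Fin (n + 1) → ℝ) :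
    (Measure.pi fun i : Fin (n + 1) => gibbs (φ (i + 1)) σ).map
        (fun x => r⁻¹ * ∑ i, (x i - m i))
      = volume.withDensity fun t =>
          ENNReal.ofReal (r * gibbsSumDensity φ (n + 1) σ (r * t + ∑ i, m i)) := by
  have hmeas := (continuous_gibbsSumDensity hφ n σ).measurable
  simp only [Finset.sum_sub_distrib, ENNReal.ofReal_mul hr.le]
  rw [← map_withDensity_inv_mul_sub hr _ hmeas.ennreal_ofReal, ← map_sum_pi_gibbs hφ,
    Measure.map_map (by fun_prop) (by fun_prop)]
  rfl

lemma gibbsSumDensity_pos (s : ℝ) : 0 < gibbsSumDensity φ (n + 1) σ s :=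
  mul_pos (mul_pos (inv_pos.2 (prod_partitionFn_pos hφ σ _)) (exp_pos _))
    (chainPartitionFn_pos hφ n s)

lemma log_gibbsSumDensity (s : ℝ) :
    log (gibbsSumDensity φ (n + 1) σ s)
      = σ * s - ∑ i : Fin (n + 1), log (partitionFn (φ (i + 1)) σ)
        + log (chainPartitionFn φ (n + 1) s) := by
  have hZ := prod_partitionFn_pos hφ σ (n + 1)
  rw [gibbsSumDensity, log_mul (by positivity) (chainPartitionFn_pos hφ n s).ne',
    log_mul (by positivity) (exp_pos _).ne', log_inv, log_exp,
    log_prod (fun (i : Fin (n + 1)) _ => ((hφ (i + 1)).partitionFn_pos σ).ne')]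
  ring

end GibbsSum

theorem free_energy_density_identity_general
    {N : ℕ} (hN : N ≠ 0) {φ : ℕ → ℝ → ℝ} (hφ : ∀ i, IsConfining (φ i)) {A σstar : ℝ}
    (hmax : ∀ σ, legendreObjective φ N A σ ≤ legendreObjective φ N A σstar)
    {g : ℝ → ℝ} (hgcont : Continuous g)
    (hg : Measure.map
        (fun x : Fin N → ℝ => (√N)⁻¹ * ∑ i, (x i - gibbsMean (φ ((i : ℕ) + 1)) σstar))
        (Measure.pi fun i : Fin N => gibbs (φ ((i : ℕ) + 1)) σstar)
      = volume.withDensity fun t => ENNReal.ofReal (g t)) :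
    freeEnergyTilde φ N A = (1 / 2 : ℝ) * log N + N * WNtilde φ N A - log (g 0) := by
  obtain ⟨n, rfl⟩ := Nat.exists_eq_add_one_of_ne_zero hN
  set N := n + 1
  have hN_pos : 0 < (N : ℝ) := by positivity
  have hpos := gibbsSumDensity_pos hφ n σstar
  rw [map_inv_mul_sum_sub_pi_gibbs hφ n σstar (sqrt_pos.2 hN_pos),
    sum_gibbsMean_eq hφ hN hmax] at hg
  have hg0 : g 0 = √N * gibbsSumDensity φ N σstar (N * A) := by
    have hcont := continuous_gibbsSumDensity hφ n σstar
    simpa using eq_of_withDensity_ofReal_eq hgcont (by fun_prop) hg.symm (x := 0)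
      (mul_pos (sqrt_pos.2 hN_pos) (hpos _))
  rw [hg0, log_mul (sqrt_pos.2 hN_pos).ne' (hpos _).ne', log_sqrt hN_pos.le,
    log_gibbsSumDensity hφ, WNtilde_eq_of_forall_le hmax, legendreObjective_eq]
  change -log (chainPartitionFn φ N (N * A)) = _
  field_simp
  ring

/-- `F̃_N(A) = (1/2) log N + N W̃_N(A) - log g̃_{N,A}(0)`. -/
theorem free_energy_density_identity
    (N : ℕ) (hN : 2 ≤ N) (φ : ℕ → ℝ → ℝ) (κ₁ κ₂ : ℝ)
    (hκ₁ : 0 < κ₁) (hκ : κ₁ ≤ κ₂)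
    (hC2 : ∀ i, ContDiff ℝ 2 (φ i))
    (hφ'' : ∀ i, ∀ y : ℝ, κ₁ ≤ deriv (deriv (φ i)) y ∧ deriv (deriv (φ i)) y ≤ κ₂)
    (A σstar : ℝ)
    (hmax : ∀ σ : ℝ,
      σ * A - (N : ℝ)⁻¹ * ∑ i ∈ Finset.Icc 1 N,
          Real.log (∫ y : ℝ, Real.exp (-φ i y + σ * y)) ≤
      σstar * A - (N : ℝ)⁻¹ * ∑ i ∈ Finset.Icc 1 N,
          Real.log (∫ y : ℝ, Real.exp (-φ i y + σstar * y)))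
    (g : ℝ → ℝ) (hgcont : Continuous g)
    (hg : Measure.map
        (fun x : Fin N → ℝ =>
          (Real.sqrt N)⁻¹ * ∑ i, (x i - gibbsMean (φ ((i : ℕ) + 1)) σstar))
        (Measure.pi fun i : Fin N => gibbs (φ ((i : ℕ) + 1)) σstar)
      = volume.withDensity fun t => ENNReal.ofReal (g t)) :
    freeEnergyTilde φ N A =
      (1 / 2 : ℝ) * Real.log N + N * WNtilde φ N A - Real.log (g 0) := by
  exact free_energy_density_identity_general (by omega)
    (fun i => isConfining_of_strongConvexOn hκ₁
      (strongConvexOn_univ_of_le_deriv2 (hC2 i) fun y => (hφ'' i y).1)) hmax hgcont hg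
end
end
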